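/- arXiv:2205.06211 — 2 statements merged into one kernel-verified Lean document; each statement's English description precedes it below -/
import Mathlib

section
/- Let ω be a modulus of continuity of order n ∈ ℕ and let D ⊆ ℝ^d be a domain. Then there exists a constant C = C(n,d,ω) such that for every f ∈ L¹_loc(D) with ‖f‖_{ω,D} < ∞ and every cube Q ⊂ D there exists a polynomial P ∈ 𝒫_n with ess sup_{x ∈ Q} |f(x) − P(x)| ≤ C·ω(ℓ(Q))·‖f‖_{ω,D}. -/
open MeasureTheory Filter Set Metric
open scoped ENNReal Topology InnerProductSpace

noncomputable section

/-- The axis-parallel closed cube in `ℝ^d` with center `x₀` and side length `l`. -/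
def cube {d : ℕ} (x₀ : EuclideanSpace ℝ (Fin d)) (l : ℝ) : Set (EuclideanSpace ℝ (Fin d)) :=
  {x | ∀ i, |x i - x₀ i| ≤ l / 2}

/-- `𝒫_n`: functions on `ℝ^d` given by polynomials of total degree at most `n`. -/
def PolyLE (d n : ℕ) : Set (EuclideanSpace ℝ (Fin d) → ℝ) :=
  {P | ∃ p : MvPolynomial (Fin d) ℝ, p.totalDegree ≤ n ∧
    ∀ x, MvPolynomial.eval (fun i => x i) p = P x}

/-- The Campanato-type Zygmund seminorm `‖f‖_{ω,D}` (valued in `ℝ≥0∞`). -/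
def zygSeminorm {d : ℕ} (ω : ℝ → ℝ) (n : ℕ) (D : Set (EuclideanSpace ℝ (Fin d)))
    (f : EuclideanSpace ℝ (Fin d) → ℝ) : ℝ≥0∞ :=
  ⨆ (x₀ : EuclideanSpace ℝ (Fin d)) (l : ℝ) (_ : 0 < l) (_ : cube x₀ l ⊆ D),
    ⨅ (P : EuclideanSpace ℝ (Fin d) → ℝ) (_ : P ∈ PolyLE d n),
      (ENNReal.ofReal (ω l * l ^ d))⁻¹ * ∫⁻ x in cube x₀ l, ENNReal.ofReal |f x - P x|

/-- The `L¹(D)` norm (valued in `ℝ≥0∞`). -/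
def l1Norm {d : ℕ} (D : Set (EuclideanSpace ℝ (Fin d)))
    (f : EuclideanSpace ℝ (Fin d) → ℝ) : ℝ≥0∞ :=
  ∫⁻ x in D, ENNReal.ofReal |f x|

/-- The two regularity conditions of order `m` for a modulus of continuity:
`ω(t)/t^q` almost decreasing for some `m ≤ q < m+1`, and `ω(t)/t^r` almost
increasing for some `m-1 < r < m`. -/
def ModulusConds (ω : ℝ → ℝ) (m : ℕ) : Prop :=
  (∃ q : ℝ, (m : ℝ) ≤ q ∧ q < (m : ℝ) + 1 ∧ ∃ C : ℝ, 0 < C ∧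
      ∀ s t : ℝ, 1 < s → 0 < t → ω (s * t) ≤ C * s ^ q * ω t) ∧
  (∃ r : ℝ, (m : ℝ) - 1 < r ∧ r < (m : ℝ) ∧ ∃ C : ℝ, 0 < C ∧
      ∀ s t : ℝ, 0 < s → s < 1 → 0 < t → ω (s * t) ≤ C * s ^ r * ω t)

/-- `ω` is a modulus of continuity of order `n`: continuous, increasing, `ω(0)=0`,
nonnegative, and `n` is the smallest positive integer satisfying the two
regularity conditions. -/
structure IsModulusOfOrder (ω : ℝ → ℝ) (n : ℕ) : Prop where
  continuousOn : ContinuousOn ω (Set.Ici 0)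
  monotoneOn : MonotoneOn ω (Set.Ici 0)
  nonneg : ∀ t, 0 ≤ t → 0 ≤ ω t
  map_zero : ω 0 = 0
  npos : 0 < n
  conds : ModulusConds ω n
  minimal : ∀ m : ℕ, 0 < m → ModulusConds ω m → n ≤ m

/-- `ξ(r) = ∫_r^1 ω(t) t^{-n-1} dt`. -/
def xi (ω : ℝ → ℝ) (n : ℕ) (r : ℝ) : ℝ :=
  ∫ t in Set.Ioc r 1, ω t / t ^ (n + 1)

/-- The associated modulus of continuity `ω̃(x) = ω(x)/max{1, ξ(x)}`. -/
def omegaTilde (ω : ℝ → ℝ) (n : ℕ) (x : ℝ) : ℝ :=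
  ω x / max 1 (xi ω n x)

/-- `D ⊂ ℝ^d` is a bounded Lipschitz domain: it is open, connected, bounded, and near
every boundary point, after a rigid motion, it coincides inside an `R`-window with the
region above the graph of a Lipschitz function (with Lipschitz constant at most `δ`). -/
def IsLipschitzDomain {d : ℕ} (D : Set (EuclideanSpace ℝ (Fin d))) : Prop :=
  IsOpen D ∧ IsConnected D ∧ Bornology.IsBounded D ∧
  ∃ δ R : ℝ, 0 < δ ∧ 0 < R ∧
    ∀ a ∈ frontier D,
      ∃ (g : EuclideanSpace ℝ (Fin d) ≃ᵢ EuclideanSpace ℝ (Fin d)) (j : Fin d)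
        (A : EuclideanSpace ℝ (Fin d) → ℝ),
        g a = 0 ∧
        LipschitzWith (Real.toNNReal δ) A ∧
        (∀ x y : EuclideanSpace ℝ (Fin d), (∀ i, i ≠ j → x i = y i) → A x = A y) ∧
        (g '' D) ∩ cube 0 R = {x ∈ cube (0 : EuclideanSpace ℝ (Fin d)) R | A x < x j}

/-- `Ω` is the density of a `C^k`-smooth homogeneous Calderón–Zygmund kernel:
homogeneous of degree `0`, `C^k` away from the origin, with zero mean on the
unit sphere. -/
structure IsCZDensity (d : ℕ) (k : ℕ∞) (Ω : EuclideanSpace ℝ (Fin d) → ℝ) : Prop where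
  homog : ∀ c : ℝ, 0 < c → ∀ x : EuclideanSpace ℝ (Fin d), Ω (c • x) = Ω x
  smooth : ContDiffOn ℝ k Ω {x : EuclideanSpace ℝ (Fin d) | x ≠ 0}
  meanZero : ∫ x : Metric.sphere (0 : EuclideanSpace ℝ (Fin d)) 1,
      Ω x ∂((volume : Measure (EuclideanSpace ℝ (Fin d))).toSphere) = 0

/-- `g = T_D f`: `g` vanishes off `D` and, for a.e. `y ∈ D`, `g y` is the principal
value `lim_{ε→0+} ∫_{x ∈ D, |y-x|>ε} f(x) K(y-x) dx` (here `f` is implicitly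
multiplied by `χ_D`). -/
def IsRestrictedCZ {d : ℕ} (D : Set (EuclideanSpace ℝ (Fin d)))
    (K : EuclideanSpace ℝ (Fin d) → ℝ) (f g : EuclideanSpace ℝ (Fin d) → ℝ) : Prop :=
  (∀ y, y ∉ D → g y = 0) ∧
  ∀ᵐ y ∂(volume.restrict D),
    Tendsto (fun ε : ℝ => ∫ x in {x ∈ D | ε < dist y x}, f x * K (y - x))
      (𝓝[>] (0 : ℝ)) (𝓝 (g y))

/-- `P` is a polynomial of near best approximation (with constant `C₀`) for `f`
on the cube with center `x₀` and side length `l`. -/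
def IsNearBestApprox {d : ℕ} (ω : ℝ → ℝ) (n : ℕ) (D : Set (EuclideanSpace ℝ (Fin d)))
    (f : EuclideanSpace ℝ (Fin d) → ℝ) (C₀ : ℝ) (x₀ : EuclideanSpace ℝ (Fin d)) (l : ℝ)
    (P : EuclideanSpace ℝ (Fin d) → ℝ) : Prop :=
  P ∈ PolyLE d n ∧
    (ENNReal.ofReal (l ^ d))⁻¹ * ∫⁻ x in cube x₀ l, ENNReal.ofReal |f x - P x| ≤
      ENNReal.ofReal (C₀ * ω l) * zygSeminorm ω n D f

/-!
On a finite-dimensional space of polynomials the supremum over a cube is bounded by the mean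
absolute value, uniformly over all cubes by scaling. Let `P` be a best `L¹` approximation of `f` on
a cube of side `l`. Best approximations on a cube and on one of its dyadic children are close in
mean on the child, hence uniformly close there, with an error controlled by the seminorm times
`ω` at that scale. Telescoping along dyadic descendants, `|f - P|` is at most a constant times
`∑ j, ω (l / 2 ^ j) ‖f‖`, up to a remainder whose mean over the cube tends to zero with the side
length of the descendants. The lower growth exponent of `ω` is positive, so this sum is
geometric and comparable to `ω l ‖f‖`.
-/

open scoped NNReal

section FiniteDimensional

lemma exists_mem_forall_norm_sub_le {E : Type*} [NormedAddCommGroup E] [NormedSpace ℝ E]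
    (V : Submodule ℝ E) [FiniteDimensional ℝ V] (x : E) :
    ∃ v ∈ V, ∀ w ∈ V, ‖x - v‖ ≤ ‖x - w‖ := by
  have htendsto : Tendsto (fun v : V => ‖x - v‖) (cocompact V) atTop := by
    refine tendsto_atTop_mono (fun v => ?_)
      (tendsto_atTop_add_const_right _ (-‖x‖) (tendsto_norm_cocompact_atTop (E := V)))
    have htri : ‖(v : E)‖ ≤ ‖x - v‖ + ‖x‖ := by simpa [add_comm] using norm_sub_le x (x - v)
    simpa [V.coe_norm] using htri
  obtain ⟨v, hv⟩ := Continuous.exists_forall_le (by fun_prop) htendsto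
  exact ⟨v, v.2, fun w hw => hv ⟨w, hw⟩⟩

variable {X : Type*} [TopologicalSpace X] [CompactSpace X] [MeasurableSpace X] [BorelSpace X]
  {μ : Measure X} [IsFiniteMeasure μ]

lemma enorm_toLp_sub_toLp {f : X → ℝ} (hf : MemLp f 1 μ) (v : C(X, ℝ)) :
    ‖hf.toLp f - ContinuousMap.toLp 1 μ ℝ v‖ₑ = ∫⁻ x, ‖f x - v x‖ₑ ∂μ := by
  rw [Lp.enorm_def, eLpNorm_one_eq_lintegral_enorm]
  refine lintegral_congr_ae ?_
  filter_upwards [Lp.coeFn_sub (hf.toLp f) (ContinuousMap.toLp 1 μ ℝ v), hf.coeFn_toLp,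
    ContinuousMap.coeFn_toLp μ (p := 1) (𝕜 := ℝ) v] with x hsub hfx hvx
  rw [hsub, Pi.sub_apply, hfx, hvx]

variable (V : Submodule ℝ C(X, ℝ)) [FiniteDimensional ℝ V]

lemma exists_mem_forall_lintegral_enorm_sub_le {f : X → ℝ} (hf : Integrable f μ) :
    ∃ v ∈ V, ∀ w ∈ V, ∫⁻ x, ‖f x - v x‖ₑ ∂μ ≤ ∫⁻ x, ‖f x - w x‖ₑ ∂μ := by
  have hf' : MemLp f 1 μ := memLp_one_iff_integrable.2 hf
  obtain ⟨_, ⟨v, hv, rfl⟩, hbest⟩ := exists_mem_forall_norm_sub_le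
    (V.map (ContinuousMap.toLp (E := ℝ) 1 μ ℝ).toLinearMap) (hf'.toLp f)
  refine ⟨v, hv, fun w hw => ?_⟩
  rw [← enorm_toLp_sub_toLp hf', ← enorm_toLp_sub_toLp hf', enorm_le_iff_norm_le]
  exact hbest _ ⟨w, hw, rfl⟩

variable (μ) in
lemma exists_enorm_apply_le_mul_lintegral_enorm [μ.IsOpenPosMeasure] :
    ∃ K : ℝ≥0, ∀ v ∈ V, ∀ x, ‖v x‖ₑ ≤ K * ∫⁻ y, ‖v y‖ₑ ∂μ := by
  let T : V →ₗ[ℝ] Lp ℝ 1 μ := (ContinuousMap.toLp 1 μ ℝ).toLinearMap ∘ₗ V.subtype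
  have hT : Function.Injective T :=
    (ContinuousMap.toLp_injective μ).comp V.injective_subtype
  obtain ⟨K, -, hK⟩ :=
    (LinearMap.injective_iff_antilipschitz (𝕜 := ℝ) (E := V) (F := Lp ℝ 1 μ) T).1 hT
  refine ⟨K, fun v hv x => ?_⟩
  have hTv : ‖T ⟨v, hv⟩‖ₑ = ∫⁻ y, ‖v y‖ₑ ∂μ := by
    simpa [T] using enorm_toLp_sub_toLp (MemLp.zero (p := 1) (μ := μ) (ε := ℝ)) v
  calc ‖v x‖ₑ ≤ ‖(⟨v, hv⟩ : V)‖ₑ := enorm_le_iff_norm_le.2 (v.norm_coe_le_norm x)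
    _ ≤ K * ‖T ⟨v, hv⟩‖ₑ := by simpa only [map_zero, edist_zero_right] using hK ⟨v, hv⟩ 0
    _ = K * ∫⁻ y, ‖v y‖ₑ ∂μ := by rw [hTv]

end FiniteDimensional

section Measure

lemma isFiniteMeasure_comap_subtype_val {X : Type*} [MeasurableSpace X] {μ : Measure X}
    {s : Set X} (hs : MeasurableSet s) (hμs : μ s < ∞) :
    IsFiniteMeasure (μ.comap ((↑) : s → X)) :=
  ⟨by simpa [comap_subtype_coe_apply hs] using hμs⟩

lemma isOpenPosMeasure_comap_subtype_val {X : Type*} [TopologicalSpace X] [MeasurableSpace X]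
    [BorelSpace X] (μ : Measure X) [μ.IsOpenPosMeasure] {s : Set X} (hs : MeasurableSet s)
    (hreg : s ⊆ closure (interior s)) :
    (μ.comap ((↑) : s → X)).IsOpenPosMeasure := by
  refine ⟨fun U hU hne hzero => ?_⟩
  obtain ⟨W, hW, rfl⟩ := isOpen_induced_iff.1 hU
  obtain ⟨x, hx⟩ := hne
  have hnonempty : (W ∩ interior s).Nonempty := mem_closure_iff.1 (hreg x.2) W hW hx
  rw [comap_subtype_coe_apply hs, Subtype.image_preimage_coe] at hzero
  refine (hW.inter isOpen_interior).measure_ne_zero μ hnonempty (measure_mono_null ?_ hzero)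
  exact fun y hy => ⟨interior_subset hy.2, hy.1⟩

lemma setLAverage_comp_add_smul {E : Type*} [NormedAddCommGroup E] [NormedSpace ℝ E]
    [FiniteDimensional ℝ E] [MeasurableSpace E] [BorelSpace E] (μ : Measure E)
    [μ.IsAddHaarMeasure] (a : E) {r : ℝ} (hr : r ≠ 0) {s : Set E} (hs : MeasurableSet s)
    {g : E → ℝ≥0∞} (hg : Measurable g) :
    ⨍⁻ x in (fun x => a + r • x) ⁻¹' s, g (a + r • x) ∂μ = ⨍⁻ x in s, g x ∂μ := by
  have hφ : Measurable fun x : E => a + r • x := by fun_prop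
  set c : ℝ≥0∞ := ENNReal.ofReal |(r ^ Module.finrank ℝ E)⁻¹| with hc
  have hmap : μ.map (fun x => a + r • x) = c • μ := by
    change μ.map ((fun x => a + x) ∘ fun x => r • x) = _
    rw [← Measure.map_map (by fun_prop) (by fun_prop), Measure.map_addHaar_smul μ hr,
      Measure.map_smul, map_add_left_eq_self]
  have hc0 : c ≠ 0 := by simp [hc, hr]
  rw [setLAverage_eq, setLAverage_eq, ← setLIntegral_map hs hg hφ, ← Measure.map_apply hφ hs, hmap,
    Measure.restrict_smul, lintegral_smul_measure, Measure.smul_apply, smul_eq_mul, smul_eq_mul,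
    ENNReal.mul_div_mul_left _ _ hc0 ENNReal.ofReal_ne_top]

end Measure

section Polynomial

variable {d n : ℕ}

lemma totalDegree_bind₁_le_of_totalDegree_le_one {σ τ R : Type*} [CommSemiring R]
    {g : σ → MvPolynomial τ R} (hg : ∀ i, (g i).totalDegree ≤ 1) (p : MvPolynomial σ R) :
    (MvPolynomial.bind₁ g p).totalDegree ≤ p.totalDegree := by
  rw [MvPolynomial.bind₁, MvPolynomial.aeval_def, MvPolynomial.eval₂_eq]
  refine MvPolynomial.totalDegree_finsetSum_le fun m hm => ?_
  calc _ ≤ (MvPolynomial.C (p.coeff m)).totalDegree + (∏ i ∈ m.support, g i ^ m i).totalDegree :=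
        MvPolynomial.totalDegree_mul _ _
    _ ≤ 0 + ∑ i ∈ m.support, m i * 1 := by
      gcongr
      · exact (MvPolynomial.totalDegree_C _).le
      · refine (MvPolynomial.totalDegree_finsetProd _ _).trans (Finset.sum_le_sum fun i _ => ?_)
        exact (MvPolynomial.totalDegree_pow _ _).trans (Nat.mul_le_mul_left _ (hg i))
    _ ≤ p.totalDegree := by
      simpa [Finsupp.sum] using MvPolynomial.le_totalDegree hm

lemma continuous_of_mem_polyLE {P : EuclideanSpace ℝ (Fin d) → ℝ} (hP : P ∈ PolyLE d n) :
    Continuous P := by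
  obtain ⟨p, -, hp⟩ := hP
  rw [← funext hp]
  exact (MvPolynomial.continuous_eval p).comp (PiLp.continuous_ofLp 2 _)

lemma sub_mem_polyLE {P Q : EuclideanSpace ℝ (Fin d) → ℝ} (hP : P ∈ PolyLE d n)
    (hQ : Q ∈ PolyLE d n) : P - Q ∈ PolyLE d n := by
  obtain ⟨p, hp, hpP⟩ := hP
  obtain ⟨q, hq, hqQ⟩ := hQ
  exact ⟨p - q, (MvPolynomial.totalDegree_sub _ _).trans (max_le hp hq), fun x => by
    rw [map_sub, hpP, hqQ, Pi.sub_apply]⟩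

lemma comp_add_smul_mem_polyLE {P : EuclideanSpace ℝ (Fin d) → ℝ} (hP : P ∈ PolyLE d n)
    (a : EuclideanSpace ℝ (Fin d)) (r : ℝ) : (fun x => P (a + r • x)) ∈ PolyLE d n := by
  obtain ⟨p, hp, hpP⟩ := hP
  let g : Fin d → MvPolynomial (Fin d) ℝ := fun i =>
    MvPolynomial.C (a i) + MvPolynomial.C r * MvPolynomial.X i
  have hg : ∀ i, (g i).totalDegree ≤ 1 := fun i =>
    (MvPolynomial.totalDegree_add _ _).trans
      (max_le (by simp) ((MvPolynomial.totalDegree_mul _ _).trans (by simp)))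
  refine ⟨MvPolynomial.bind₁ g p,
    (totalDegree_bind₁_le_of_totalDegree_le_one hg p).trans hp, fun x => ?_⟩
  beta_reduce
  rw [← hpP, MvPolynomial.eval, MvPolynomial.eval₂Hom_bind₁]
  simp [g]

/-- Restriction to `s` of polynomial functions of degree at most `n`. The range is the space of
elements of `𝒫_n` regarded as continuous functions on `s`. -/
def polyRestrict (s : Set (EuclideanSpace ℝ (Fin d))) (n : ℕ) :
    MvPolynomial.restrictTotalDegree (Fin d) ℝ n →ₗ[ℝ] C(s, ℝ) where
  toFun p := ⟨fun x => MvPolynomial.eval x.1.ofLp p.1,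
    (MvPolynomial.continuous_eval p.1).comp
      ((PiLp.continuous_ofLp 2 _).comp continuous_subtype_val)⟩
  map_add' p q := by ext x; simp
  map_smul' c p := by ext x; simp

lemma mem_range_polyRestrict {s : Set (EuclideanSpace ℝ (Fin d))} {v : C(s, ℝ)} :
    v ∈ LinearMap.range (polyRestrict s n) ↔ ∃ P ∈ PolyLE d n, ∀ x : s, v x = P x := by
  constructor
  · rintro ⟨p, rfl⟩
    exact ⟨fun x => MvPolynomial.eval x.ofLp p.1,
      ⟨p.1, (MvPolynomial.mem_restrictTotalDegree _ _ _).1 p.2, fun _ => rfl⟩, fun _ => rfl⟩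
  · rintro ⟨P, ⟨p, hp, hpP⟩, hvP⟩
    refine ⟨⟨p, (MvPolynomial.mem_restrictTotalDegree _ _ _).2 hp⟩, ?_⟩
    ext x
    rw [hvP, ← hpP]
    rfl

variable {μ : Measure (EuclideanSpace ℝ (Fin d))} [IsFiniteMeasureOnCompacts μ]
  {s : Set (EuclideanSpace ℝ (Fin d))}

variable (n) in
lemma exists_polyLE_forall_setLIntegral_enorm_sub_le (hs : IsCompact s)
    {f : EuclideanSpace ℝ (Fin d) → ℝ} (hf : IntegrableOn f s μ) :
    ∃ P ∈ PolyLE d n, ∀ R ∈ PolyLE d n,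
      ∫⁻ x in s, ‖f x - P x‖ₑ ∂μ ≤ ∫⁻ x in s, ‖f x - R x‖ₑ ∂μ := by
  have : CompactSpace s := isCompact_iff_compactSpace.1 hs
  have := isFiniteMeasure_comap_subtype_val hs.measurableSet (hs.measure_lt_top (μ := μ))
  have hf' : Integrable (fun x : s => f x) (μ.comap (↑)) :=
    (integrableOn_iff_comap_subtypeVal hs.measurableSet).1 hf
  obtain ⟨v, hv, hbest⟩ :=
    exists_mem_forall_lintegral_enorm_sub_le (LinearMap.range (polyRestrict s n)) hf'
  obtain ⟨P, hP, hvP⟩ := mem_range_polyRestrict.1 hv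
  refine ⟨P, hP, fun R hR => ?_⟩
  have hR' := hbest ⟨fun x => R x, (continuous_of_mem_polyLE hR).comp continuous_subtype_val⟩
    (mem_range_polyRestrict.2 ⟨R, hR, fun _ => rfl⟩)
  simp only [hvP, ContinuousMap.coe_mk] at hR'
  rwa [lintegral_subtype_comap hs.measurableSet fun x => ‖f x - P x‖ₑ,
    lintegral_subtype_comap hs.measurableSet fun x => ‖f x - R x‖ₑ] at hR'

variable (μ n) in
lemma exists_enorm_polyLE_le_mul_setLIntegral_enorm [μ.IsOpenPosMeasure] (hs : IsCompact s)
    (hreg : s ⊆ closure (interior s)) :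
    ∃ K : ℝ≥0, ∀ P ∈ PolyLE d n, ∀ x ∈ s, ‖P x‖ₑ ≤ K * ∫⁻ y in s, ‖P y‖ₑ ∂μ := by
  have : CompactSpace s := isCompact_iff_compactSpace.1 hs
  have := isFiniteMeasure_comap_subtype_val hs.measurableSet (hs.measure_lt_top (μ := μ))
  have := isOpenPosMeasure_comap_subtype_val μ hs.measurableSet hreg
  obtain ⟨K, hK⟩ := exists_enorm_apply_le_mul_lintegral_enorm
    (μ.comap ((↑) : s → EuclideanSpace ℝ (Fin d))) (LinearMap.range (polyRestrict s n))
  refine ⟨K, fun P hP x hx => ?_⟩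
  have hPx := hK ⟨fun x => P x, (continuous_of_mem_polyLE hP).comp continuous_subtype_val⟩
    (mem_range_polyRestrict.2 ⟨P, hP, fun _ => rfl⟩) ⟨x, hx⟩
  simp only [ContinuousMap.coe_mk] at hPx
  rwa [lintegral_subtype_comap hs.measurableSet fun x => ‖P x‖ₑ] at hPx

end Polynomial

section Cube

variable {d : ℕ} (x₀ : EuclideanSpace ℝ (Fin d)) {l : ℝ}

lemma cube_eq_preimage_closedBall (hl : 0 ≤ l) :
    cube x₀ l = PiLp.homeomorph 2 (fun _ : Fin d => ℝ) ⁻¹' closedBall x₀.ofLp (l / 2) := by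
  ext x
  exact (dist_pi_le_iff (f := x.ofLp) (by positivity)).symm

lemma isCompact_cube (hl : 0 ≤ l) : IsCompact (cube x₀ l) := by
  rw [cube_eq_preimage_closedBall x₀ hl, Homeomorph.isCompact_preimage]
  exact isCompact_closedBall _ _

lemma measurableSet_cube (hl : 0 ≤ l) : MeasurableSet (cube x₀ l) :=
  (isCompact_cube x₀ hl).measurableSet

lemma cube_subset_closure_interior (hl : 0 < l) :
    cube x₀ l ⊆ closure (interior (cube x₀ l)) := by
  rw [cube_eq_preimage_closedBall x₀ hl.le, ← Homeomorph.preimage_interior,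
    ← Homeomorph.preimage_closure, interior_closedBall _ (by positivity),
    closure_ball _ (by positivity)]

lemma volume_cube (hl : 0 ≤ l) : volume (cube x₀ l) = ENNReal.ofReal (l ^ d) := by
  rw [cube_eq_preimage_closedBall x₀ hl]
  refine ((PiLp.volume_preserving_ofLp (Fin d)).measure_preimage
    measurableSet_closedBall.nullMeasurableSet).trans ?_
  rw [Real.volume_pi_closedBall _ (by positivity), Fintype.card_fin, mul_div_cancel₀ _ two_ne_zero]

lemma preimage_add_smul_cube (hl : 0 < l) : (fun x => x₀ + l • x) ⁻¹' cube x₀ l = cube 0 1 := by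
  ext x
  refine forall_congr' fun i => ?_
  simp [abs_mul, abs_of_pos hl, div_eq_mul_inv, hl]

lemma setLAverage_cube_eq (hl : 0 < l) {g : EuclideanSpace ℝ (Fin d) → ℝ≥0∞}
    (hg : Measurable g) :
    ⨍⁻ x in cube x₀ l, g x ∂volume = ∫⁻ x in cube 0 1, g (x₀ + l • x) := by
  rw [← setLAverage_comp_add_smul volume x₀ hl.ne' (measurableSet_cube x₀ hl.le) hg,
    preimage_add_smul_cube x₀ hl, setLAverage_eq, volume_cube 0 zero_le_one]
  simp

/-- Center of the dyadic child of `cube x₀ l` in the orthant direction `σ`; the child itself is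
`cube (childCenter x₀ l σ) (l / 2)`. -/
def childCenter (x₀ : EuclideanSpace ℝ (Fin d)) (l : ℝ) (σ : Fin d → Bool) :
    EuclideanSpace ℝ (Fin d) :=
  WithLp.toLp 2 fun i => x₀ i + if σ i then l / 4 else -(l / 4)

lemma cube_childCenter_subset (hl : 0 ≤ l) (σ : Fin d → Bool) :
    cube (childCenter x₀ l σ) (l / 2) ⊆ cube x₀ l := by
  intro x hx i
  have hxi : |x i - (x₀ i + if σ i then l / 4 else -(l / 4))| ≤ l / 2 / 2 := hx i
  rw [abs_le] at *
  split_ifs at hxi <;> constructor <;> linarith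

lemma cube_subset_iUnion_cube_childCenter :
    cube x₀ l ⊆ ⋃ σ : Fin d → Bool, cube (childCenter x₀ l σ) (l / 2) := by
  refine fun x hx => mem_iUnion.2 ⟨fun i => decide (x₀ i ≤ x i), fun i => ?_⟩
  have hxi := abs_le.1 (hx i)
  change |x i - (x₀ i + if decide (x₀ i ≤ x i) then l / 4 else -(l / 4))| ≤ l / 2 / 2
  rw [abs_le]
  by_cases hle : x₀ i ≤ x i <;> simp only [hle, decide_true, decide_false, if_true, if_false,
    Bool.false_eq_true] <;> constructor <;> linarith

lemma volume_cube_eq_two_pow_mul_volume_cube_half (hl : 0 ≤ l) (x₁ : EuclideanSpace ℝ (Fin d)) :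
    volume (cube x₀ l) = 2 ^ d * volume (cube x₁ (l / 2)) := by
  rw [volume_cube x₀ hl, volume_cube x₁ (by positivity),
    ← ENNReal.ofReal_ofNat, ← ENNReal.ofReal_pow (by positivity),
    ← ENNReal.ofReal_mul (by positivity), ← mul_pow, mul_div_cancel₀ _ two_ne_zero]

lemma setLAverage_cube_half_le {x₁ : EuclideanSpace ℝ (Fin d)} (hl : 0 ≤ l)
    (hsub : cube x₁ (l / 2) ⊆ cube x₀ l) (g : EuclideanSpace ℝ (Fin d) → ℝ≥0∞) :
    ⨍⁻ x in cube x₁ (l / 2), g x ∂volume ≤ 2 ^ d * ⨍⁻ x in cube x₀ l, g x ∂volume := by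
  rw [setLAverage_eq, setLAverage_eq, volume_cube_eq_two_pow_mul_volume_cube_half x₀ hl x₁,
    ← mul_div_assoc, ENNReal.mul_div_mul_left _ _ (by simp) (by simp)]
  gcongr

lemma setLAverage_cube_le_of_forall_childCenter (hl : 0 < l)
    {g : EuclideanSpace ℝ (Fin d) → ℝ≥0∞} {c : ℝ≥0∞}
    (hc : ∀ σ, ⨍⁻ x in cube (childCenter x₀ l σ) (l / 2), g x ∂volume ≤ c) :
    ⨍⁻ x in cube x₀ l, g x ∂volume ≤ c := by
  rw [setLAverage_eq]
  refine ENNReal.div_le_of_le_mul ?_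
  calc ∫⁻ x in cube x₀ l, g x
      ≤ ∑' σ, ∫⁻ x in cube (childCenter x₀ l σ) (l / 2), g x :=
        (lintegral_mono_set (cube_subset_iUnion_cube_childCenter x₀)).trans
          (lintegral_iUnion_le _ _)
    _ = ∑ σ, volume (cube (childCenter x₀ l σ) (l / 2)) *
          ⨍⁻ x in cube (childCenter x₀ l σ) (l / 2), g x ∂volume := by
        rw [tsum_fintype]
        exact Finset.sum_congr rfl fun σ _ => (measure_mul_setLAverage _
          (isCompact_cube _ (by positivity)).measure_ne_top).symm
    _ ≤ ∑ _ : Fin d → Bool, volume (cube x₀ (l / 2)) * c := by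
        refine Finset.sum_le_sum fun σ _ => mul_le_mul' (le_of_eq ?_) (hc σ)
        rw [volume_cube _ (by positivity), volume_cube _ (by positivity)]
    _ = c * volume (cube x₀ l) := by
        rw [volume_cube_eq_two_pow_mul_volume_cube_half x₀ hl.le x₀]
        simp [mul_comm, mul_left_comm]

end Cube

section MeanApproximation

variable {d n : ℕ} {K : ℝ≥0} {ε : ℝ → ℝ≥0∞} {D : Set (EuclideanSpace ℝ (Fin d))}
  {f P P₁ : EuclideanSpace ℝ (Fin d) → ℝ} {x₀ x₁ : EuclideanSpace ℝ (Fin d)} {l : ℝ}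

/-- `K` bounds the supremum of every polynomial in `𝒫_n` over every cube by its mean absolute
value there; scale invariance makes one constant serve all cubes. -/
def IsSupMeanConstant (d n : ℕ) (K : ℝ≥0) : Prop :=
  ∀ P ∈ PolyLE d n, ∀ (x₀ : EuclideanSpace ℝ (Fin d)) (l : ℝ), 0 < l →
    ∀ x ∈ cube x₀ l, ‖P x‖ₑ ≤ K * ⨍⁻ y in cube x₀ l, ‖P y‖ₑ ∂volume

lemma exists_isSupMeanConstant (d n : ℕ) : ∃ K, IsSupMeanConstant d n K := by
  obtain ⟨K, hK⟩ := exists_enorm_polyLE_le_mul_setLIntegral_enorm n volume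
    (isCompact_cube (0 : EuclideanSpace ℝ (Fin d)) zero_le_one)
    (cube_subset_closure_interior 0 zero_lt_one)
  refine ⟨K, fun P hP x₀ l hl x hx => ?_⟩
  have hscale : x₀ + l • l⁻¹ • (x - x₀) = x := by rw [smul_inv_smul₀ hl.ne', add_sub_cancel]
  have hmem : l⁻¹ • (x - x₀) ∈ cube 0 1 := by
    rwa [← preimage_add_smul_cube x₀ hl, mem_preimage, hscale]
  rw [setLAverage_cube_eq x₀ hl (continuous_of_mem_polyLE hP).measurable.enorm]
  simpa only [hscale] using hK _ (comp_add_smul_mem_polyLE hP x₀ l) _ hmem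

/-- `f` is approximated in mean by `𝒫_n` on every cube of side `l` contained in `D`, with error at
most `ε l`. -/
def HasMeanApprox (n : ℕ) (ε : ℝ → ℝ≥0∞) (D : Set (EuclideanSpace ℝ (Fin d)))
    (f : EuclideanSpace ℝ (Fin d) → ℝ) : Prop :=
  ∀ (x₀ : EuclideanSpace ℝ (Fin d)) (l : ℝ), 0 < l → cube x₀ l ⊆ D →
    ∃ P ∈ PolyLE d n, ⨍⁻ x in cube x₀ l, ‖f x - P x‖ₑ ∂volume ≤ ε l

lemma IsSupMeanConstant.enorm_approximant_sub_le (hK : IsSupMeanConstant d n K) (hl : 0 < l)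
    (hsub : cube x₁ (l / 2) ⊆ cube x₀ l) (hP : P ∈ PolyLE d n) (hP₁ : P₁ ∈ PolyLE d n)
    (hf : AEMeasurable f (volume.restrict (cube x₀ l)))
    {x : EuclideanSpace ℝ (Fin d)} (hx : x ∈ cube x₁ (l / 2)) :
    ‖P₁ x - P x‖ₑ ≤ K * (2 ^ d * ⨍⁻ y in cube x₀ l, ‖f y - P y‖ₑ ∂volume
      + ⨍⁻ y in cube x₁ (l / 2), ‖f y - P₁ y‖ₑ ∂volume) := by
  refine (hK _ (sub_mem_polyLE hP₁ hP) x₁ (l / 2) (half_pos hl) x hx).trans ?_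
  gcongr
  have hmeas : AEMeasurable (fun y => ‖f y - P y‖ₑ) (volume.restrict (cube x₁ (l / 2))) :=
    ((hf.mono_set hsub).sub (continuous_of_mem_polyLE hP).aemeasurable).enorm
  calc ⨍⁻ y in cube x₁ (l / 2), ‖P₁ y - P y‖ₑ ∂volume
      ≤ ⨍⁻ y in cube x₁ (l / 2), (‖f y - P y‖ₑ + ‖f y - P₁ y‖ₑ) ∂volume := by
        refine lintegral_mono fun y => ?_
        simpa only [sub_sub_sub_cancel_left] using
          enorm_sub_le (a := f y - P y) (b := f y - P₁ y)
    _ = ⨍⁻ y in cube x₁ (l / 2), ‖f y - P y‖ₑ ∂volume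
          + ⨍⁻ y in cube x₁ (l / 2), ‖f y - P₁ y‖ₑ ∂volume :=
        lintegral_add_left' (hmeas.smul_measure _) _
    _ ≤ _ := by
        gcongr
        exact setLAverage_cube_half_le x₀ hl.le hsub _

/-- Replacing the approximant of a cube by those of its dyadic children changes it by at most the
subtracted amount for that scale, and what is left over after `k` generations is a mean error
at scale `l / 2 ^ k`. -/
lemma HasMeanApprox.setLAverage_enorm_sub_tsub_le (hK : IsSupMeanConstant d n K)
    (happrox : HasMeanApprox n ε D f) (hl : 0 < l) (hD : cube x₀ l ⊆ D)
    (hf : AEMeasurable f (volume.restrict (cube x₀ l))) (hP : P ∈ PolyLE d n)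
    (hPε : ⨍⁻ x in cube x₀ l, ‖f x - P x‖ₑ ∂volume ≤ ε l) (k : ℕ) :
    ⨍⁻ x in cube x₀ l, (‖f x - P x‖ₑ
      - K * ∑ j ∈ Finset.range k, (2 ^ d * ε (l / 2 ^ j) + ε (l / 2 ^ (j + 1)))) ∂volume
      ≤ ε (l / 2 ^ k) := by
  induction k generalizing x₀ l P with
  | zero => simpa using hPε
  | succ k ih =>
    refine setLAverage_cube_le_of_forall_childCenter x₀ hl fun σ => ?_
    have hsub := cube_childCenter_subset x₀ hl.le σ
    obtain ⟨P₁, hP₁, hP₁ε⟩ := happrox _ _ (half_pos hl) (hsub.trans hD)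
    have hrescale : ∀ j : ℕ, l / 2 ^ (j + 1) = l / 2 / 2 ^ j := fun j => by
      rw [pow_succ', div_div]
    have hstep : ∀ x ∈ cube (childCenter x₀ l σ) (l / 2),
        ‖f x - P x‖ₑ ≤ ‖f x - P₁ x‖ₑ + K * (2 ^ d * ε l + ε (l / 2)) := fun x hx =>
      calc ‖f x - P x‖ₑ ≤ ‖f x - P₁ x‖ₑ + ‖P₁ x - P x‖ₑ := by
            simpa only [sub_add_sub_cancel] using enorm_add_le (f x - P₁ x) (P₁ x - P x)
        _ ≤ ‖f x - P₁ x‖ₑ + K * (2 ^ d * ε l + ε (l / 2)) := by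
            grw [hK.enorm_approximant_sub_le hl hsub hP hP₁ hf hx, hPε, hP₁ε]
    rw [hrescale k]
    refine le_trans ?_ (ih (half_pos hl) (hsub.trans hD) (hf.mono_set hsub) hP₁ hP₁ε)
    refine lintegral_mono_ae (Measure.ae_smul_measure ?_ _)
    refine ae_restrict_of_forall_mem (measurableSet_cube _ (half_pos hl).le) fun x hx => ?_
    rw [Finset.sum_range_succ', mul_add, add_comm (_ * _), ← tsub_tsub]
    simp only [hrescale, pow_zero, div_one]
    gcongr
    exact tsub_le_iff_right.2 (hstep x hx)

lemma HasMeanApprox.ae_enorm_sub_le (hK : IsSupMeanConstant d n K)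
    (happrox : HasMeanApprox n ε D f) (hl : 0 < l) (hD : cube x₀ l ⊆ D)
    (hf : AEMeasurable f (volume.restrict (cube x₀ l))) (hP : P ∈ PolyLE d n)
    (hPε : ⨍⁻ x in cube x₀ l, ‖f x - P x‖ₑ ∂volume ≤ ε l)
    (hsum : ∑' j : ℕ, ε (l / 2 ^ j) ≠ ∞) :
    ∀ᵐ x ∂volume.restrict (cube x₀ l),
      ‖f x - P x‖ₑ ≤ K * ((2 ^ d + 1) * ∑' j : ℕ, ε (l / 2 ^ j)) := by
  set S := ∑' j : ℕ, ε (l / 2 ^ j)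
  have hpartial : ∀ k, ∑ j ∈ Finset.range k, (2 ^ d * ε (l / 2 ^ j) + ε (l / 2 ^ (j + 1)))
      ≤ (2 ^ d + 1) * S := fun k => by
    rw [Finset.sum_add_distrib, ← Finset.mul_sum, add_mul, one_mul]
    gcongr
    · exact ENNReal.sum_le_tsum _
    · exact (ENNReal.sum_le_tsum _).trans
        (ENNReal.tsum_comp_le_tsum_of_injective (add_left_injective 1) fun j => ε (l / 2 ^ j))
  have hmean : ⨍⁻ x in cube x₀ l, (‖f x - P x‖ₑ - K * ((2 ^ d + 1) * S)) ∂volume = 0 := by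
    refine le_antisymm (ge_of_tendsto' (ENNReal.tendsto_atTop_zero_of_tsum_ne_top hsum)
      fun k => ?_) zero_le
    refine (lintegral_mono fun x => ?_).trans
      (happrox.setLAverage_enorm_sub_tsub_le hK hl hD hf hP hPε k)
    grw [hpartial k]
  have hmeas : AEMeasurable (fun x => ‖f x - P x‖ₑ - K * ((2 ^ d + 1) * S))
      (volume.restrict (cube x₀ l)) :=
    (hf.sub (continuous_of_mem_polyLE hP).aemeasurable).enorm.sub_const _
  rw [setLAverage_eq, ENNReal.div_eq_zero_iff,
    or_iff_left (isCompact_cube x₀ hl.le).measure_ne_top, lintegral_eq_zero_iff' hmeas] at hmean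
  filter_upwards [hmean] with x hx using tsub_eq_zero_iff_le.1 hx

end MeanApproximation

section Zygmund

variable {d n : ℕ} {ω : ℝ → ℝ} {D : Set (EuclideanSpace ℝ (Fin d))}
  {f : EuclideanSpace ℝ (Fin d) → ℝ}

/-- Where `ω l = 0` the weight `(ENNReal.ofReal 0)⁻¹` is `∞`, so finiteness of the seminorm forces
the best approximation to coincide with `f` almost everywhere. -/
lemma hasMeanApprox_of_zygSeminorm_lt_top (hf : LocallyIntegrableOn f D)
    (hS : zygSeminorm ω n D f < ∞) :
    HasMeanApprox n (fun l => ENNReal.ofReal (ω l) * zygSeminorm ω n D f) D f := by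
  intro x₀ l hl hD
  have hcompact := isCompact_cube x₀ hl.le
  obtain ⟨P, hP, hbest⟩ := exists_polyLE_forall_setLIntegral_enorm_sub_le n hcompact
    (hf.integrableOn_compact_subset hD hcompact)
  refine ⟨P, hP, ?_⟩
  have hnormalized : (∫⁻ x in cube x₀ l, ‖f x - P x‖ₑ) / ENNReal.ofReal (ω l * l ^ d)
      ≤ zygSeminorm ω n D f := by
    refine le_trans (le_iInf₂ fun R hR => ?_) (le_iSup₂_of_le x₀ l (le_iSup₂_of_le hl hD le_rfl))
    simp only [← Real.enorm_eq_ofReal_abs]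
    rw [ENNReal.div_eq_inv_mul]
    exact mul_le_mul_right (hbest R hR) _
  rw [ENNReal.div_le_iff_le_mul (Or.inr hS.ne) (Or.inl ENNReal.ofReal_ne_top),
    ENNReal.ofReal_mul' (by positivity)] at hnormalized
  rw [setLAverage_eq, volume_cube x₀ hl.le]
  refine ENNReal.div_le_of_le_mul (hnormalized.trans_eq ?_)
  ring

lemma exists_tsum_ofReal_div_two_pow_le {C r : ℝ} (hr : 0 < r) (hC : 0 ≤ C)
    (hω : ∀ s t : ℝ, 0 < s → s < 1 → 0 < t → ω (s * t) ≤ C * s ^ r * ω t) :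
    ∃ M : ℝ≥0, ∀ l : ℝ, 0 < l →
      ∑' j : ℕ, ENNReal.ofReal (ω (l / 2 ^ j)) ≤ M * ENNReal.ofReal (ω l) := by
  set ρ : ℝ := (1 / 2) ^ r
  have hρ0 : 0 ≤ ρ := by positivity
  have hρ1 : ρ < 1 := Real.rpow_lt_one (by norm_num) (by norm_num) hr
  have hdecay : ∀ (l : ℝ) (j : ℕ), 0 < l →
      ENNReal.ofReal (ω (l / 2 ^ j)) ≤ ENNReal.ofReal (max C 1 * ρ ^ j) * ENNReal.ofReal (ω l) := by
    rintro l (_ | j) hl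
    · simpa using le_mul_of_one_le_left' (ENNReal.one_le_ofReal.2 (le_max_right C 1))
    · have hs : ((1 / 2 : ℝ) ^ (j + 1)) ^ r = ρ ^ (j + 1) :=
        (Real.rpow_pow_comm (by norm_num) r (j + 1)).symm
      have hscaled := hω ((1 / 2) ^ (j + 1)) l (by positivity)
        (pow_lt_one₀ (by norm_num) (by norm_num) j.succ_ne_zero) hl
      rw [hs, one_div_pow, one_div_mul_eq_div] at hscaled
      refine (ENNReal.ofReal_le_ofReal hscaled).trans ?_
      rw [ENNReal.ofReal_mul (by positivity)]
      gcongr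
      exact le_max_left C 1
  have hsummable : Summable fun j : ℕ => max C 1 * ρ ^ j :=
    (summable_geometric_of_lt_one hρ0 hρ1).mul_left _
  refine ⟨(∑' j : ℕ, ENNReal.ofReal (max C 1 * ρ ^ j)).toNNReal, fun l hl => ?_⟩
  rw [ENNReal.coe_toNNReal hsummable.tsum_ofReal_ne_top, ← ENNReal.tsum_mul_right]
  exact ENNReal.tsum_le_tsum fun j => hdecay l j hl

lemma IsModulusOfOrder.exists_tsum_le (hω : IsModulusOfOrder ω n) :
    ∃ M : ℝ≥0, ∀ l : ℝ, 0 < l →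
      ∑' j : ℕ, ENNReal.ofReal (ω (l / 2 ^ j)) ≤ M * ENNReal.ofReal (ω l) := by
  obtain ⟨-, r, hr, -, C, hC, hscale⟩ := hω.conds
  have hn : (1 : ℝ) ≤ n := by exact_mod_cast hω.npos
  exact exists_tsum_ofReal_div_two_pow_le (by linarith) hC.le hscale

end Zygmund

theorem statement_12_general {d : ℕ} (n : ℕ) {ω : ℝ → ℝ} (hω : ∀ t, 0 < t → 0 ≤ ω t) {M : ℝ≥0}
    (hM : ∀ l, 0 < l → ∑' j : ℕ, ENNReal.ofReal (ω (l / 2 ^ j)) ≤ M * ENNReal.ofReal (ω l)) :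
    ∃ C : ℝ, 0 < C ∧ ∀ (D : Set (EuclideanSpace ℝ (Fin d))) (f : EuclideanSpace ℝ (Fin d) → ℝ),
      LocallyIntegrableOn f D → zygSeminorm ω n D f < ⊤ →
      ∀ (x₀ : EuclideanSpace ℝ (Fin d)) (l : ℝ), 0 < l → cube x₀ l ⊆ D →
        ∃ P ∈ PolyLE d n, ∀ᵐ x ∂(volume.restrict (cube x₀ l)),
          |f x - P x| ≤ C * ω l * (zygSeminorm ω n D f).toReal := by
  obtain ⟨K, hK⟩ := exists_isSupMeanConstant d n
  refine ⟨K * (2 ^ d + 1) * M + 1, by positivity, fun D f hf hS x₀ l hl hD => ?_⟩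
  set S := zygSeminorm ω n D f
  have happrox := hasMeanApprox_of_zygSeminorm_lt_top hf hS
  obtain ⟨P, hP, hPε⟩ := happrox x₀ l hl hD
  have hsum : ∑' j : ℕ, ENNReal.ofReal (ω (l / 2 ^ j)) * S ≤ M * ENNReal.ofReal (ω l) * S := by
    rw [ENNReal.tsum_mul_right]
    exact mul_le_mul_left (hM l hl) _
  have hfinite : M * ENNReal.ofReal (ω l) * S ≠ ∞ := by finiteness
  have hmeas : AEMeasurable f (volume.restrict (cube x₀ l)) :=
    (hf.integrableOn_compact_subset hD (isCompact_cube x₀ hl.le)).aemeasurable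
  refine ⟨P, hP, ?_⟩
  filter_upwards [happrox.ae_enorm_sub_le hK hl hD hmeas hP hPε (ne_top_of_le_ne_top hfinite hsum)]
    with x hx
  have hreal : |f x - P x| ≤ K * ((2 ^ d + 1) * (M * ω l * S.toReal)) := by
    have htoReal := ENNReal.toReal_mono (by finiteness)
      (hx.trans (mul_le_mul_right (mul_le_mul_right hsum _) _))
    simpa [ENNReal.toReal_add, ENNReal.toReal_ofReal (hω l hl)] using htoReal
  calc |f x - P x| ≤ K * (2 ^ d + 1) * M * (ω l * S.toReal) := hreal.trans_eq (by ring)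
    _ ≤ (K * (2 ^ d + 1) * M + 1) * ω l * S.toReal := by
      rw [mul_assoc _ (ω l)]
      exact mul_le_mul_of_nonneg_right (by linarith) (mul_nonneg (hω l hl) ENNReal.toReal_nonneg)

/-- For `f` with finite Zygmund seminorm, on each cube there is a polynomial in `𝒫_n`
which approximates `f` uniformly (a.e.) to within `C ω(ℓ) ‖f‖_{ω,D}`. -/
theorem statement_12 {d : ℕ} (n : ℕ) (ω : ℝ → ℝ) (hω : IsModulusOfOrder ω n) :
    ∃ C : ℝ, 0 < C ∧
      ∀ (D : Set (EuclideanSpace ℝ (Fin d))), IsOpen D → IsConnected D →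
        ∀ f : EuclideanSpace ℝ (Fin d) → ℝ,
          LocallyIntegrableOn f D → zygSeminorm ω n D f < ⊤ →
          ∀ (x₀ : EuclideanSpace ℝ (Fin d)) (l : ℝ), 0 < l → cube x₀ l ⊆ D →
            ∃ P ∈ PolyLE d n,
              ∀ᵐ x ∂(volume.restrict (cube x₀ l)),
                |f x - P x| ≤ C * ω l * (zygSeminorm ω n D f).toReal := by
  obtain ⟨M, hM⟩ := hω.exists_tsum_le
  obtain ⟨C, hC, hbound⟩ := statement_12_general n (fun t ht => hω.nonneg t ht.le) hM
  exact ⟨C, hC, fun D _ _ => hbound D⟩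

end
end

section
/- Let ω be a modulus of continuity of order n ∈ ℕ, let D ⊂ ℝ^d be a bounded Lipschitz domain, let T be a homogeneous C^{n+1}-smooth Calderón–Zygmund operator, and let C₀ > 0. Then there exists a constant C such that for every f ∈ 𝒞_ω(D), every cube Q with 2Q ⊂ D, and every polynomial P_Q ∈ 𝒫_n of near best approximation with constant C₀ for f on Q, the function f₂ = (f − P_Q)·χ_{2Q} satisfies: the principal value T f₂(y) = lim_{ε→0} ∫_{|y−x|>ε} f₂(x)·K(y−x) dx exists for almost every y ∈ Q, and (1/|Q|)·∫_Q |T f₂(y)| dy ≤ C·ω(ℓ(Q))·(‖f‖_{ω,D} + ‖f‖_{L¹(D)}). -/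
open MeasureTheory Filter Set Metric
open scoped ENNReal Topology InnerProductSpace

noncomputable section

/-!
Let `h = f - P`. On every cube of side `λᵏ ℓ` around a point `y` of `Q` there is a polynomial of
degree at most `n` within `C ω(λᵏ ℓ) ≲ θᵏ ω(ℓ)` of `h` in the mean. Comparing consecutive
polynomials by Markov's inequality, their values at `y` converge geometrically to some `c`, and,
when `λ` is small compared with the Markov constant, so do the means of `|h - c|` themselves.
Hence `(h - c) K(y - ·)` is absolutely integrable near `y`, while the constant `c` contributes
nothing since `K` integrates to zero over annuli. So the principal value exists at every `y ∈ Q`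
and is `O(ω(ℓ) ‖f‖_{ω,D})` there; no bound for `T` on a Lebesgue space is needed.
-/

/-! ### Cubes and means over cubes -/

section Cube

variable {d : ℕ} {x₀ y : EuclideanSpace ℝ (Fin d)} {s t : ℝ}

lemma cube_eq_preimage_Icc (y : EuclideanSpace ℝ (Fin d)) (t : ℝ) :
    cube y t = PiLp.homeomorph 2 (fun _ : Fin d => ℝ) ⁻¹'
      Icc (fun i => y i - t / 2) (fun i => y i + t / 2) := by
  ext x
  simp only [cube, mem_ofPred_eq, abs_sub_le_iff, mem_preimage, mem_Icc, Pi.le_def, ← forall_and]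
  refine forall_congr' fun i => ?_
  change _ ↔ y i - t / 2 ≤ x i ∧ x i ≤ y i + t / 2
  constructor <;> rintro ⟨h₁, h₂⟩ <;> constructor <;> linarith

lemma isCompact_cube_s18 (y : EuclideanSpace ℝ (Fin d)) (t : ℝ) : IsCompact (cube y t) := by
  rw [cube_eq_preimage_Icc]
  exact (Homeomorph.isCompact_preimage _).2 isCompact_Icc

lemma measurableSet_cube_s18 (y : EuclideanSpace ℝ (Fin d)) (t : ℝ) : MeasurableSet (cube y t) :=
  (isCompact_cube_s18 y t).measurableSet

lemma volume_cube_s18 (y : EuclideanSpace ℝ (Fin d)) (ht : 0 ≤ t) :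
    volume (cube y t) = ENNReal.ofReal (t ^ d) := by
  rw [cube_eq_preimage_Icc]
  change volume ((@WithLp.ofLp 2 (Fin d → ℝ)) ⁻¹' _) = _
  rw [(PiLp.volume_preserving_ofLp (Fin d)).measure_preimage measurableSet_Icc.nullMeasurableSet,
    Real.volume_Icc_pi]
  simp only [add_sub_sub_cancel, add_halves, Finset.prod_const, Finset.card_univ, Fintype.card_fin,
    ENNReal.ofReal_pow ht]

lemma volume_real_cube (y : EuclideanSpace ℝ (Fin d)) (ht : 0 ≤ t) :
    volume.real (cube y t) = t ^ d := by
  rw [measureReal_def, volume_cube_s18 y ht, ENNReal.toReal_ofReal (by positivity)]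

lemma cube_subset_cube (y : EuclideanSpace ℝ (Fin d)) (h : s ≤ t) : cube y s ⊆ cube y t :=
  fun _ hx i => (hx i).trans (by linarith)

lemma cube_subset_cube_add (hy : y ∈ cube x₀ s) : cube y t ⊆ cube x₀ (s + t) := fun x hx i =>
  calc |x i - x₀ i| ≤ |x i - y i| + |y i - x₀ i| := abs_sub_le _ _ _
    _ ≤ t / 2 + s / 2 := add_le_add (hx i) (hy i)
    _ = (s + t) / 2 := by ring

lemma self_mem_cube (y : EuclideanSpace ℝ (Fin d)) (ht : 0 ≤ t) : y ∈ cube y t := fun i => by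
  rw [sub_self, abs_zero]
  positivity

lemma closedBall_subset_cube (y : EuclideanSpace ℝ (Fin d)) (t : ℝ) :
    closedBall y (t / 2) ⊆ cube y t := fun x hx i =>
  calc |x i - y i| = ‖(x - y) i‖ := rfl
    _ ≤ ‖x - y‖ := PiLp.norm_apply_le _ i
    _ ≤ t / 2 := by rwa [mem_closedBall, dist_eq_norm] at hx

lemma add_smul_mem_cube_iff {z : EuclideanSpace ℝ (Fin d)} (ht : 0 < t) :
    y + t • z ∈ cube y (t * s) ↔ z ∈ cube 0 s := by
  refine forall_congr' fun i => ?_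
  rw [PiLp.add_apply, PiLp.smul_apply, PiLp.zero_apply, smul_eq_mul, add_sub_cancel_left, sub_zero,
    abs_mul, abs_of_pos ht, mul_div_assoc, mul_le_mul_iff_right₀ ht]

lemma setIntegral_cube_eq_smul (F : EuclideanSpace ℝ (Fin d) → ℝ) (y : EuclideanSpace ℝ (Fin d))
    (ht : 0 < t) : ∫ x in cube y t, F x = t ^ d * ∫ z in cube 0 1, F (y + t • z) := by
  have indicator_eq : (cube 0 1).indicator (fun z => F (y + t • z))
      = fun z => (cube y t).indicator F (y + t • z) := by
    have preimage_eq : (fun z => y + t • z) ⁻¹' cube y t = cube 0 1 := by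
      ext z
      simpa only [mul_one, mem_preimage] using add_smul_mem_cube_iff (y := y) (s := 1) (z := z) ht
    rw [← preimage_eq]
    exact funext fun z => indicator_comp_right fun z => y + t • z
  rw [← integral_indicator (measurableSet_cube_s18 0 1), indicator_eq,
    Measure.integral_comp_smul_of_nonneg volume (fun w => (cube y t).indicator F (y + w)) t
      (hR := ht.le),
    integral_add_left_eq_self (fun w => (cube y t).indicator F w) y,
    integral_indicator (measurableSet_cube_s18 y t), finrank_euclideanSpace_fin, smul_eq_mul,
    mul_inv_cancel_left₀ (by positivity)]

end Cube

section CubeMean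

variable {d : ℕ} {u v w : EuclideanSpace ℝ (Fin d) → ℝ} {y z : EuclideanSpace ℝ (Fin d)}
  {b s t : ℝ}

/-- The mean of `|u|` over the cube with center `y` and side length `t`; the volume `t ^ d` is
written out, so the value is meaningful only for `0 < t`. -/
def cubeMean (u : EuclideanSpace ℝ (Fin d) → ℝ) (y : EuclideanSpace ℝ (Fin d)) (t : ℝ) : ℝ :=
  (t ^ d)⁻¹ * ∫ x in cube y t, |u x|

lemma setIntegral_abs_eq_mul_cubeMean (u : EuclideanSpace ℝ (Fin d) → ℝ)
    (y : EuclideanSpace ℝ (Fin d)) (ht : 0 < t) :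
    ∫ x in cube y t, |u x| = t ^ d * cubeMean u y t := by
  rw [cubeMean, mul_inv_cancel_left₀ (by positivity)]

lemma cubeMean_nonneg (u : EuclideanSpace ℝ (Fin d) → ℝ) (y : EuclideanSpace ℝ (Fin d))
    (ht : 0 < t) : 0 ≤ cubeMean u y t :=
  mul_nonneg (by positivity) (integral_nonneg fun _ => abs_nonneg _)

lemma cubeMean_sub_comm (u v : EuclideanSpace ℝ (Fin d) → ℝ) (y : EuclideanSpace ℝ (Fin d))
    (t : ℝ) : cubeMean (u - v) y t = cubeMean (v - u) y t := by
  simp only [cubeMean, Pi.sub_apply, abs_sub_comm]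

lemma cubeMean_sub_le (ht : 0 < t) (hu : IntegrableOn u (cube y t))
    (hv : IntegrableOn v (cube y t)) (hw : IntegrableOn w (cube y t)) :
    cubeMean (u - w) y t ≤ cubeMean (u - v) y t + cubeMean (v - w) y t := by
  have integral_le : ∫ x in cube y t, |(u - w) x|
      ≤ ∫ x in cube y t, (|(u - v) x| + |(v - w) x|) :=
    integral_mono (hu.sub hw).abs ((hu.sub hv).abs.add (hv.sub hw).abs) fun x =>
      abs_sub_le (u x) (v x) (w x)
  rw [integral_add (hu.sub hv).abs (hv.sub hw).abs] at integral_le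
  rw [cubeMean, cubeMean, cubeMean, ← mul_add]
  gcongr

lemma cubeMean_le_cubeMean_sub_add (ht : 0 < t) (hu : IntegrableOn u (cube y t))
    (hv : IntegrableOn v (cube y t)) : cubeMean u y t ≤ cubeMean (u - v) y t + cubeMean v y t := by
  simpa only [sub_zero] using cubeMean_sub_le (w := 0) ht hu hv integrableOn_zero

lemma cubeMean_le_of_forall_abs_le (ht : 0 < t) (hu : ∀ x ∈ cube y t, |u x| ≤ b) :
    cubeMean u y t ≤ b := by
  have norm_le := norm_setIntegral_le_of_norm_le_const (μ := volume) (f := fun x => |u x|)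
    (isCompact_cube_s18 y t).measure_lt_top (by simpa only [Real.norm_eq_abs, abs_abs] using hu)
  rw [volume_real_cube y ht.le] at norm_le
  rw [cubeMean, inv_mul_le_iff₀ (by positivity), mul_comm]
  exact (le_abs_self _).trans norm_le

lemma cubeMean_le_of_subset (hs : 0 < s) (ht : 0 < t) (hu : IntegrableOn u (cube y t))
    (h : cube z s ⊆ cube y t) : cubeMean u z s ≤ (t / s) ^ d * cubeMean u y t := by
  have integral_le : ∫ x in cube z s, |u x| ≤ ∫ x in cube y t, |u x| :=
    setIntegral_mono_set hu.abs (Eventually.of_forall fun _ => abs_nonneg _) h.eventuallyLE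
  calc cubeMean u z s ≤ (s ^ d)⁻¹ * ∫ x in cube y t, |u x| := by rw [cubeMean]; gcongr
    _ = (t / s) ^ d * cubeMean u y t := by
      rw [setIntegral_abs_eq_mul_cubeMean u y ht, div_pow]
      ring

lemma cubeMean_eq_cubeMean_unit (u : EuclideanSpace ℝ (Fin d) → ℝ)
    (y : EuclideanSpace ℝ (Fin d)) (ht : 0 < t) :
    cubeMean u y t = cubeMean (fun z => u (y + t • z)) 0 1 := by
  rw [cubeMean, cubeMean, setIntegral_cube_eq_smul _ y ht, inv_mul_cancel_left₀ (by positivity),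
    one_pow, inv_one, one_mul]

end CubeMean

/-! ### Polynomials of bounded degree -/

lemma totalDegree_aeval_le_of_forall_totalDegree_le_one {σ τ R : Type*} [CommSemiring R]
    (p : MvPolynomial σ R) {g : σ → MvPolynomial τ R} (hg : ∀ i, (g i).totalDegree ≤ 1) :
    (MvPolynomial.aeval g p).totalDegree ≤ p.totalDegree := by
  rw [MvPolynomial.aeval_def, MvPolynomial.eval₂_eq]
  refine MvPolynomial.totalDegree_finsetSum_le fun s hs => ?_
  rw [MvPolynomial.algebraMap_eq]
  calc (MvPolynomial.C (p.coeff s) * ∏ i ∈ s.support, g i ^ s i).totalDegree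
      ≤ (∏ i ∈ s.support, g i ^ s i).totalDegree := by
        simpa only [MvPolynomial.totalDegree_C, zero_add] using
          MvPolynomial.totalDegree_mul (MvPolynomial.C (p.coeff s)) (∏ i ∈ s.support, g i ^ s i)
    _ ≤ ∑ i ∈ s.support, (g i ^ s i).totalDegree := MvPolynomial.totalDegree_finsetProd _ _
    _ ≤ ∑ i ∈ s.support, s i := Finset.sum_le_sum fun i _ =>
        (MvPolynomial.totalDegree_pow _ _).trans
          ((Nat.mul_le_mul_left _ (hg i)).trans_eq (mul_one _))
    _ ≤ p.totalDegree := MvPolynomial.le_totalDegree hs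

namespace PolyLE

variable {d n : ℕ} {P R : EuclideanSpace ℝ (Fin d) → ℝ}

lemma continuous (hP : P ∈ PolyLE d n) : Continuous P := by
  obtain ⟨p, -, hp⟩ := hP
  rw [← funext hp]
  exact (MvPolynomial.continuous_eval p).comp (by fun_prop)

lemma integrableOn_cube (hP : P ∈ PolyLE d n) (y : EuclideanSpace ℝ (Fin d)) (t : ℝ) :
    IntegrableOn P (cube y t) :=
  (continuous hP).continuousOn.integrableOn_compact (isCompact_cube_s18 y t)

lemma sub_mem (hP : P ∈ PolyLE d n) (hR : R ∈ PolyLE d n) : P - R ∈ PolyLE d n := by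
  obtain ⟨p, hp, hpP⟩ := hP
  obtain ⟨r, hr, hrR⟩ := hR
  refine ⟨p - r, (MvPolynomial.totalDegree_sub p r).trans (max_le hp hr), fun x => ?_⟩
  rw [map_sub, hpP, hrR, Pi.sub_apply]

lemma const_mem (d n : ℕ) (c : ℝ) : (fun _ => c) ∈ PolyLE d n :=
  ⟨MvPolynomial.C c, by simp, fun _ => MvPolynomial.eval_C c⟩

lemma comp_add_smul_mem (hP : P ∈ PolyLE d n) (y : EuclideanSpace ℝ (Fin d)) (t : ℝ) :
    (fun z => P (y + t • z)) ∈ PolyLE d n := by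
  obtain ⟨p, hp, hpP⟩ := hP
  let g (i : Fin d) : MvPolynomial (Fin d) ℝ :=
    MvPolynomial.C (y i) + MvPolynomial.C t * MvPolynomial.X i
  have hg (i : Fin d) : (g i).totalDegree ≤ 1 := by
    refine (MvPolynomial.totalDegree_add _ _).trans (max_le (by simp) ?_)
    exact (MvPolynomial.totalDegree_mul _ _).trans (by simp)
  refine ⟨MvPolynomial.aeval g p,
    (totalDegree_aeval_le_of_forall_totalDegree_le_one p hg).trans hp, fun z => ?_⟩
  change _ = P (y + t • z)
  rw [← hpP, MvPolynomial.aeval_def, MvPolynomial.eval₂_eq',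
    MvPolynomial.eval_eq' _ p]
  simp [g]

end PolyLE

section PolyToL1

variable {d n : ℕ}

lemma continuous_eval_coe (p : MvPolynomial (Fin d) ℝ) :
    Continuous fun x : EuclideanSpace ℝ (Fin d) => MvPolynomial.eval (fun i => x i) p :=
  (MvPolynomial.continuous_eval p).comp (by fun_prop)

lemma integrable_eval_unitCube (p : MvPolynomial (Fin d) ℝ) :
    Integrable (fun x : EuclideanSpace ℝ (Fin d) => MvPolynomial.eval (fun i => x i) p)
      (volume.restrict (cube 0 1)) :=
  (continuous_eval_coe p).continuousOn.integrableOn_compact (isCompact_cube_s18 0 1)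

lemma eq_zero_of_eval_ae_eq_zero_unitCube {p : MvPolynomial (Fin d) ℝ}
    (hp : (fun x : EuclideanSpace ℝ (Fin d) => MvPolynomial.eval (fun i => x i) p)
      =ᵐ[volume.restrict (cube 0 1)] fun _ => 0) : p = 0 := by
  let I : Set ℝ := Ioo (-(1 / 2)) (1 / 2)
  let U : Set (EuclideanSpace ℝ (Fin d)) :=
    PiLp.homeomorph 2 (fun _ : Fin d => ℝ) ⁻¹' univ.pi fun _ => I
  have isOpen_U : IsOpen U :=
    (isOpen_set_pi finite_univ fun _ _ => isOpen_Ioo).preimage (Homeomorph.continuous _)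
  have U_subset : U ⊆ cube 0 1 := fun x hx i => by
    have hxi : x i ∈ I := hx i (mem_univ i)
    rw [PiLp.zero_apply, sub_zero]
    exact abs_le.2 ⟨hxi.1.le, hxi.2.le⟩
  have eqOn_U := Measure.eqOn_open_of_ae_eq (ae_restrict_of_ae_restrict_of_subset U_subset hp)
    isOpen_U (continuous_eval_coe p).continuousOn continuousOn_const
  refine MvPolynomial.funext_set (fun _ => I) (fun _ => Ioo_infinite (by norm_num)) fun x hx => ?_
  rw [map_zero]
  exact eqOn_U (x := WithLp.toLp 2 x) hx

/-- The linear map sending a polynomial of degree at most `n` to its class in `L¹` of the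
unit cube. -/
def polyToL1 (d n : ℕ) : MvPolynomial.restrictTotalDegree (Fin d) ℝ n →ₗ[ℝ]
    Lp ℝ 1 (volume.restrict (cube (0 : EuclideanSpace ℝ (Fin d)) 1)) where
  toFun p := (integrable_eval_unitCube p.1).toL1 _
  map_add' p q := by
    rw [← Integrable.toL1_add]
    congr 1
    ext x
    simp
  map_smul' c p := by
    rw [RingHom.id_apply, ← Integrable.toL1_smul]
    congr 1
    ext x
    simp

lemma norm_polyToL1 (p : MvPolynomial.restrictTotalDegree (Fin d) ℝ n) :
    ‖polyToL1 d n p‖ = cubeMean (fun x => MvPolynomial.eval (fun i => x i) p.1) 0 1 := by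
  rw [cubeMean, one_pow, inv_one, one_mul]
  exact L1.norm_of_fun_eq_integral_norm (integrable_eval_unitCube p.1)

lemma injective_polyToL1 (d n : ℕ) : Function.Injective (polyToL1 d n) := by
  rw [← LinearMap.ker_eq_bot, LinearMap.ker_eq_bot']
  intro p hp
  have ae_eq_zero := (integrable_eval_unitCube p.1).coeFn_toL1
  rw [show (integrable_eval_unitCube p.1).toL1 _ = 0 from hp] at ae_eq_zero
  exact Subtype.ext (eq_zero_of_eval_ae_eq_zero_unitCube (ae_eq_zero.symm.trans (Lp.coeFn_zero ..)))

lemma exists_abs_apply_le_mul_cubeMean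
    (φ : MvPolynomial.restrictTotalDegree (Fin d) ℝ n →ₗ[ℝ] ℝ) :
    ∃ M : ℝ, 0 ≤ M ∧ ∀ p : MvPolynomial.restrictTotalDegree (Fin d) ℝ n,
      |φ p| ≤ M * cubeMean (fun x => MvPolynomial.eval (fun i => x i) p.1) 0 1 := by
  let e := LinearEquiv.ofInjective (polyToL1 d n) (injective_polyToL1 d n)
  let ψ := LinearMap.toContinuousLinearMap (φ ∘ₗ e.symm.toLinearMap)
  refine ⟨‖ψ‖, norm_nonneg ψ, fun p => ?_⟩
  calc |φ p| = ‖ψ (e p)‖ := by simp [ψ]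
    _ ≤ ‖ψ‖ * ‖polyToL1 d n p‖ := ψ.le_opNorm (e p)
    _ = _ := by rw [norm_polyToL1]

lemma exists_sum_abs_coeff_le_mul_cubeMean (d n : ℕ) :
    ∃ M : ℝ, 0 ≤ M ∧ ∀ p ∈ MvPolynomial.restrictTotalDegree (Fin d) ℝ n,
      ∑ s ∈ p.support, |p.coeff s| ≤
        M * cubeMean (fun x => MvPolynomial.eval (fun i => x i) p) 0 1 := by
  choose M M_nonneg abs_coeff_le using fun s : Fin d →₀ ℕ =>
    exists_abs_apply_le_mul_cubeMean
      ((MvPolynomial.lcoeff ℝ s).domRestrict (MvPolynomial.restrictTotalDegree (Fin d) ℝ n))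
  let exponents : Finset (Fin d →₀ ℕ) := (Finsupp.finite_of_degree_le n).toFinset
  refine ⟨∑ s ∈ exponents, M s, Finset.sum_nonneg fun s _ => M_nonneg s, fun p hp => ?_⟩
  have support_subset : p.support ⊆ exponents := fun s hs => by
    rw [Set.Finite.mem_toFinset]
    exact (MvPolynomial.le_totalDegree hs).trans
      ((MvPolynomial.mem_restrictTotalDegree _ _ _).1 hp)
  rw [Finset.sum_mul]
  calc ∑ s ∈ p.support, |p.coeff s| ≤ ∑ s ∈ exponents, |p.coeff s| :=
        Finset.sum_le_sum_of_subset_of_nonneg support_subset fun _ _ _ => abs_nonneg _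
    _ ≤ _ := Finset.sum_le_sum fun s _ => abs_coeff_le s ⟨p, hp⟩

end PolyToL1

section EvalBound

variable {σ : Type*} {x : σ → ℝ} {r : ℝ}

lemma abs_prod_pow_le_one (hx : ∀ i, |x i| ≤ 1) (s : σ → ℕ) (A : Finset σ) :
    |∏ i ∈ A, x i ^ s i| ≤ 1 := by
  rw [Finset.abs_prod]
  refine Finset.prod_le_one (fun i _ => abs_nonneg _) fun i _ => ?_
  rw [abs_pow]
  exact pow_le_one₀ (abs_nonneg _) (hx i)

lemma abs_prod_pow_sub_prod_zero_pow_le (hr : r ∈ Icc 0 1) (hx : ∀ i, |x i| ≤ r) (s : σ →₀ ℕ) :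
    |∏ i ∈ s.support, x i ^ s i - ∏ i ∈ s.support, (0 : ℝ) ^ s i| ≤ r := by
  classical
  have x_le_one (i : σ) : |x i| ≤ 1 := (hx i).trans hr.2
  obtain hs | ⟨j, hj⟩ := s.support.eq_empty_or_nonempty
  · simpa only [hs, Finset.prod_empty, sub_self, abs_zero] using hr.1
  have sj_ne_zero : s j ≠ 0 := Finsupp.mem_support_iff.1 hj
  rw [Finset.prod_eq_zero (f := fun i => (0 : ℝ) ^ s i) hj (zero_pow sj_ne_zero), sub_zero,
    ← Finset.mul_prod_erase _ _ hj, abs_mul, abs_pow]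
  calc |x j| ^ s j * |∏ i ∈ s.support.erase j, x i ^ s i|
      ≤ |x j| * 1 := mul_le_mul (pow_le_of_le_one (abs_nonneg _) (x_le_one j) sj_ne_zero)
        (abs_prod_pow_le_one x_le_one s _) (abs_nonneg _) (abs_nonneg _)
    _ ≤ r := (mul_one _).trans_le (hx j)

lemma abs_eval_le_sum_abs_coeff (p : MvPolynomial σ ℝ) (hx : ∀ i, |x i| ≤ 1) :
    |MvPolynomial.eval x p| ≤ ∑ s ∈ p.support, |p.coeff s| := by
  rw [MvPolynomial.eval_eq]
  refine (Finset.abs_sum_le_sum_abs _ _).trans (Finset.sum_le_sum fun s _ => ?_)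
  rw [abs_mul]
  exact mul_le_of_le_one_right (abs_nonneg _) (abs_prod_pow_le_one hx s _)

lemma abs_eval_sub_eval_zero_le (p : MvPolynomial σ ℝ) (hr : r ∈ Icc 0 1)
    (hx : ∀ i, |x i| ≤ r) :
    |MvPolynomial.eval x p - MvPolynomial.eval 0 p| ≤ r * ∑ s ∈ p.support, |p.coeff s| := by
  rw [MvPolynomial.eval_eq, MvPolynomial.eval_eq, ← Finset.sum_sub_distrib, Finset.mul_sum]
  refine (Finset.abs_sum_le_sum_abs _ _).trans (Finset.sum_le_sum fun s _ => ?_)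
  rw [← mul_sub, abs_mul, mul_comm r]
  exact mul_le_mul_of_nonneg_left (abs_prod_pow_sub_prod_zero_pow_le hr hx s) (abs_nonneg _)

end EvalBound

/-- `M` controls polynomials of degree at most `n` at the scale of a cube: their values on the
double of the cube, and their oscillation around its center, in terms of their mean on the cube. -/
structure IsMarkovConst (d n : ℕ) (M : ℝ) : Prop where
  one_le : 1 ≤ M
  abs_le : ∀ P ∈ PolyLE d n, ∀ (y : EuclideanSpace ℝ (Fin d)) (t : ℝ), 0 < t →
    ∀ x ∈ cube y (2 * t), |P x| ≤ M * cubeMean P y t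
  abs_sub_le : ∀ P ∈ PolyLE d n, ∀ (y : EuclideanSpace ℝ (Fin d)) (t lam : ℝ), 0 < t →
    lam ∈ Icc 0 1 → ∀ x ∈ cube y (lam * t), |P x - P y| ≤ M * lam * cubeMean P y t

lemma exists_isMarkovConst (d n : ℕ) : ∃ M, IsMarkovConst d n M := by
  obtain ⟨M, M_nonneg, sum_le⟩ := exists_sum_abs_coeff_le_mul_cubeMean d n
  have le_mul_cubeMean {P : EuclideanSpace ℝ (Fin d) → ℝ} (hP : P ∈ PolyLE d n)
      (y : EuclideanSpace ℝ (Fin d)) {t : ℝ} (ht : 0 < t) :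
      ∃ p : MvPolynomial (Fin d) ℝ,
        (∀ z, MvPolynomial.eval (fun i => z i) p = P (y + t • z)) ∧
        ∑ s ∈ p.support, |p.coeff s| ≤ (1 + M) * cubeMean P y t := by
    obtain ⟨p, hp, eval_p⟩ := PolyLE.comp_add_smul_mem hP y t
    refine ⟨p, eval_p, ?_⟩
    have sum_le_p := sum_le p ((MvPolynomial.mem_restrictTotalDegree _ _ _).2 hp)
    rw [funext eval_p, ← cubeMean_eq_cubeMean_unit P y ht] at sum_le_p
    linarith [cubeMean_nonneg P y ht]
  have eq_add_smul (x y : EuclideanSpace ℝ (Fin d)) {t : ℝ} (ht : 0 < t) :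
      y + t • t⁻¹ • (x - y) = x := by
    rw [smul_inv_smul₀ ht.ne', add_sub_cancel]
  refine ⟨1 + M, by linarith, fun P hP y t ht x hx => ?_, fun P hP y t lam ht hlam x hx => ?_⟩
  · obtain ⟨p, eval_p, sum_le_p⟩ := le_mul_cubeMean hP y ht
    rw [← eq_add_smul x y ht, mul_comm, add_smul_mem_cube_iff ht] at hx
    rw [← eq_add_smul x y ht, ← eval_p]
    refine (abs_eval_le_sum_abs_coeff p fun i => ?_).trans sum_le_p
    simpa only [PiLp.zero_apply, sub_zero, div_self (two_ne_zero' ℝ)] using hx i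
  · obtain ⟨p, eval_p, sum_le_p⟩ := le_mul_cubeMean hP y ht
    have eval_zero_p : MvPolynomial.eval 0 p = P y := by simpa using eval_p 0
    rw [← eq_add_smul x y ht, mul_comm, add_smul_mem_cube_iff ht] at hx
    rw [← eq_add_smul x y ht, ← eval_p, ← eval_zero_p, mul_comm _ lam, mul_assoc]
    refine (abs_eval_sub_eval_zero_le p hlam fun i => ?_).trans
      (mul_le_mul_of_nonneg_left sum_le_p hlam.1)
    simpa only [PiLp.zero_apply, sub_zero] using (hx i).trans (half_le_self hlam.1)

/-! ### Decay towards a constant -/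

section Campanato

variable {d n : ℕ} {h : EuclideanSpace ℝ (Fin d) → ℝ} {y : EuclideanSpace ℝ (Fin d)}
  {l lam θ A M : ℝ} {p : ℕ → EuclideanSpace ℝ (Fin d) → ℝ}

lemma cube_pow_mul_subset (y : EuclideanSpace ℝ (Fin d)) (hl : 0 < l) (hlam : lam ∈ Ioo 0 1)
    (k : ℕ) : cube y (lam ^ k * l) ⊆ cube y l :=
  cube_subset_cube y (mul_le_of_le_one_left hl.le (pow_le_one₀ hlam.1.le hlam.2.le))

lemma pow_mul_div_pow_succ_mul (hl : 0 < l) (hlam : 0 < lam) (k : ℕ) :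
    lam ^ k * l / (lam ^ (k + 1) * l) = lam⁻¹ := by
  rw [mul_div_mul_right _ _ hl.ne', pow_succ, div_mul_cancel_left₀ (pow_ne_zero k hlam.ne')]

/-- The means of `|u|` over the cubes with center `y` and side lengths `lam ^ k * l` decay at the
geometric rate `b * θ ^ k`. -/
def GeometricDecay (u : EuclideanSpace ℝ (Fin d) → ℝ) (y : EuclideanSpace ℝ (Fin d))
    (l lam θ b : ℝ) : Prop :=
  ∀ k : ℕ, cubeMean u y (lam ^ k * l) ≤ b * θ ^ k

/-- A scale ratio `lam` and a rate `θ` such that, for polynomials with Markov constant `M`, passing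
to a cube `lam` times smaller multiplies the oscillation by at most `θ / 2`. -/
structure IsContractionPair (M lam θ : ℝ) : Prop where
  lam_mem : lam ∈ Ioo 0 1
  θ_mem : θ ∈ Ioo 0 1
  mul_le : M * lam ≤ θ / 2

/-- The polynomials `p k`, of degree at most `n`, approximate `h` on the cubes with center `y` and
side lengths `lam ^ k * l`, in the mean, up to `A * θ ^ k`. -/
structure IsScaleApprox (n : ℕ) (h : EuclideanSpace ℝ (Fin d) → ℝ)
    (y : EuclideanSpace ℝ (Fin d)) (l lam θ A : ℝ)
    (p : ℕ → EuclideanSpace ℝ (Fin d) → ℝ) : Prop where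
  pos : 0 < l
  integrableOn : IntegrableOn h (cube y l)
  mem : ∀ k, p k ∈ PolyLE d n
  mean_le : cubeMean h y l ≤ A
  mean_sub_le : ∀ k, cubeMean (h - p k) y (lam ^ k * l) ≤ A * θ ^ k

namespace IsMarkovConst

lemma pos (hM : IsMarkovConst d n M) : 0 < M := one_pos.trans_le hM.one_le

lemma abs_apply_center_le (hM : IsMarkovConst d n M) {P : EuclideanSpace ℝ (Fin d) → ℝ}
    (hP : P ∈ PolyLE d n) (y : EuclideanSpace ℝ (Fin d)) (hl : 0 < l) :
    |P y| ≤ M * cubeMean P y l :=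
  hM.abs_le P hP y l hl y (self_mem_cube y (by positivity))

lemma cubeMean_sub_center_le (hM : IsMarkovConst d n M) {P : EuclideanSpace ℝ (Fin d) → ℝ}
    (hP : P ∈ PolyLE d n) (y : EuclideanSpace ℝ (Fin d)) (hl : 0 < l) :
    cubeMean (P - fun _ => P y) y l ≤ (M + 1) * cubeMean P y l := by
  have triangle := cubeMean_sub_le (v := 0) hl (PolyLE.integrableOn_cube hP y l)
    integrableOn_zero (PolyLE.integrableOn_cube (PolyLE.const_mem d n (P y)) y l)
  rw [sub_zero] at triangle
  have mean_const_le : cubeMean (0 - fun _ => P y) y l ≤ M * cubeMean P y l :=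
    cubeMean_le_of_forall_abs_le hl fun x _ => by
      simpa only [Pi.sub_apply, Pi.zero_apply, zero_sub, abs_neg] using
        hM.abs_apply_center_le hP y hl
  linarith

lemma cubeMean_sub_center_contract (hM : IsMarkovConst d n M)
    {P : EuclideanSpace ℝ (Fin d) → ℝ} (hP : P ∈ PolyLE d n) (y : EuclideanSpace ℝ (Fin d))
    (hl : 0 < l) (hlam : lam ∈ Ioo 0 1) :
    cubeMean (P - fun _ => P y) y (lam * l) ≤ M * lam * cubeMean (P - fun _ => P y) y l := by
  refine cubeMean_le_of_forall_abs_le (mul_pos hlam.1 hl) fun x hx => ?_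
  simpa only [Pi.sub_apply, sub_self, sub_zero] using
    hM.abs_sub_le _ (PolyLE.sub_mem hP (PolyLE.const_mem d n (P y))) y l lam hl
      (Ioo_subset_Icc_self hlam) x hx

end IsMarkovConst

lemma le_mul_pow_of_le_add_half_mul {a b : ℝ} {e : ℕ → ℝ} (hθ : 0 ≤ θ) (hab : 2 * a ≤ θ * b)
    (e_zero : e 0 ≤ b) (e_succ : ∀ k, e (k + 1) ≤ a * θ ^ k + θ / 2 * e k) (k : ℕ) :
    e k ≤ b * θ ^ k := by
  induction k with
  | zero => simpa only [pow_zero, mul_one] using e_zero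
  | succ k ih =>
    calc e (k + 1) ≤ a * θ ^ k + θ / 2 * e k := e_succ k
      _ ≤ θ * b / 2 * θ ^ k + θ / 2 * (b * θ ^ k) := by gcongr; linarith
      _ = b * θ ^ (k + 1) := by ring

namespace IsScaleApprox

lemma nonneg (hp : IsScaleApprox n h y l lam θ A p) : 0 ≤ A :=
  (cubeMean_nonneg h y hp.pos).trans hp.mean_le

lemma scale_pos (hp : IsScaleApprox n h y l lam θ A p) (hlam : 0 < lam) (k : ℕ) :
    0 < lam ^ k * l := mul_pos (pow_pos hlam k) hp.pos

lemma integrableOn_scale (hp : IsScaleApprox n h y l lam θ A p) (hlam : lam ∈ Ioo 0 1) (k : ℕ) :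
    IntegrableOn h (cube y (lam ^ k * l)) :=
  hp.integrableOn.mono_set (cube_pow_mul_subset y hp.pos hlam k)

lemma cubeMean_sub_succ_le (hp : IsScaleApprox n h y l lam θ A p) (hlam : lam ∈ Ioo 0 1)
    (hθ : θ ∈ Ioo 0 1) (k : ℕ) :
    cubeMean (p (k + 1) - p k) y (lam ^ (k + 1) * l) ≤ ((lam ^ d)⁻¹ + 1) * A * θ ^ k := by
  have h_integrable := hp.integrableOn_scale hlam
  have p_integrable (j k : ℕ) := PolyLE.integrableOn_cube (hp.mem j) y (lam ^ k * l)
  have triangle := cubeMean_sub_le (hp.scale_pos hlam.1 (k + 1)) (p_integrable (k + 1) (k + 1))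
    (h_integrable (k + 1)) (p_integrable k (k + 1))
  have fine_le : cubeMean (p (k + 1) - h) y (lam ^ (k + 1) * l) ≤ A * θ ^ k := by
    rw [cubeMean_sub_comm]
    refine (hp.mean_sub_le (k + 1)).trans ?_
    gcongr A * ?_
    · exact hp.nonneg
    · exact pow_le_pow_of_le_one hθ.1.le hθ.2.le (Nat.le_succ k)
  have coarse_le : cubeMean (h - p k) y (lam ^ (k + 1) * l) ≤ (lam ^ d)⁻¹ * (A * θ ^ k) := by
    have le_ratio := cubeMean_le_of_subset (hp.scale_pos hlam.1 (k + 1)) (hp.scale_pos hlam.1 k)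
      ((h_integrable k).sub (p_integrable k k)) (cube_subset_cube y (mul_le_mul_of_nonneg_right
        (pow_le_pow_of_le_one hlam.1.le hlam.2.le (Nat.le_succ k)) hp.pos.le))
    rw [pow_mul_div_pow_succ_mul hp.pos hlam.1, inv_pow] at le_ratio
    exact le_ratio.trans (mul_le_mul_of_nonneg_left (hp.mean_sub_le k)
      (inv_nonneg.2 (pow_nonneg hlam.1.le d)))
  linarith

lemma abs_center_sub_succ_le (hp : IsScaleApprox n h y l lam θ A p) (hM : IsMarkovConst d n M)
    (hlam : lam ∈ Ioo 0 1) (hθ : θ ∈ Ioo 0 1) (k : ℕ) :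
    |p (k + 1) y - p k y| ≤ M * (((lam ^ d)⁻¹ + 1) * A) * θ ^ k :=
  calc |p (k + 1) y - p k y|
      ≤ M * cubeMean (p (k + 1) - p k) y (lam ^ (k + 1) * l) :=
        hM.abs_apply_center_le (PolyLE.sub_mem (hp.mem _) (hp.mem _)) y (hp.scale_pos hlam.1 _)
    _ ≤ M * (((lam ^ d)⁻¹ + 1) * A * θ ^ k) :=
        mul_le_mul_of_nonneg_left (hp.cubeMean_sub_succ_le hlam hθ k) hM.pos.le
    _ = M * (((lam ^ d)⁻¹ + 1) * A) * θ ^ k := by ring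

lemma cubeMean_sub_center_zero_le (hp : IsScaleApprox n h y l lam θ A p)
    (hM : IsMarkovConst d n M) :
    cubeMean (p 0 - fun _ => p 0 y) y l ≤ (M + 1) * (2 * A) := by
  have triangle := cubeMean_le_cubeMean_sub_add hp.pos
    (PolyLE.integrableOn_cube (hp.mem 0) y l) hp.integrableOn
  have approx := hp.mean_sub_le 0
  rw [pow_zero, one_mul, pow_zero, mul_one, cubeMean_sub_comm] at approx
  refine (hM.cubeMean_sub_center_le (hp.mem 0) y hp.pos).trans
    (mul_le_mul_of_nonneg_left ?_ (by linarith [hM.pos]))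
  linarith [hp.mean_le]

lemma cubeMean_sub_center_succ_le (hp : IsScaleApprox n h y l lam θ A p)
    (hM : IsMarkovConst d n M) (hc : IsContractionPair M lam θ) (k : ℕ) :
    cubeMean (p (k + 1) - fun _ => p (k + 1) y) y (lam ^ (k + 1) * l) ≤
      (M + 1) * (((lam ^ d)⁻¹ + 1) * A) * θ ^ k
        + θ / 2 * cubeMean (p k - fun _ => p k y) y (lam ^ k * l) := by
  have t_pos := hp.scale_pos hc.lam_mem.1
  have center_integrable (j : ℕ) := PolyLE.integrableOn_cube
    (PolyLE.sub_mem (hp.mem j) (PolyLE.const_mem d n (p j y))) y (lam ^ (k + 1) * l)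
  have triangle := cubeMean_le_cubeMean_sub_add (t_pos (k + 1)) (center_integrable (k + 1))
    (center_integrable k)
  rw [sub_sub_sub_comm] at triangle
  have difference_le := hM.cubeMean_sub_center_le
    (PolyLE.sub_mem (hp.mem (k + 1)) (hp.mem k)) y (t_pos (k + 1))
  have contract := hM.cubeMean_sub_center_contract (hp.mem k) y (t_pos k) hc.lam_mem
  rw [← mul_assoc, ← pow_succ'] at contract
  calc _ ≤ _ := triangle
    _ ≤ (M + 1) * (((lam ^ d)⁻¹ + 1) * A * θ ^ k)
        + M * lam * cubeMean (p k - fun _ => p k y) y (lam ^ k * l) :=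
      add_le_add (difference_le.trans (mul_le_mul_of_nonneg_left
        (hp.cubeMean_sub_succ_le hc.lam_mem hc.θ_mem k) (by linarith [hM.pos]))) contract
    _ ≤ _ := by
      rw [← mul_assoc]
      gcongr
      · exact cubeMean_nonneg _ y (t_pos k)
      · exact hc.mul_le

lemma geometric_cubeMean_sub_center_le (hp : IsScaleApprox n h y l lam θ A p)
    (hM : IsMarkovConst d n M) (hc : IsContractionPair M lam θ) (k : ℕ) :
    cubeMean (p k - fun _ => p k y) y (lam ^ k * l) ≤
      2 * (M + 1) * (((lam ^ d)⁻¹ + 1) * A) / θ * θ ^ k := by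
  have A_nonneg := hp.nonneg
  have M_pos := hM.pos
  obtain ⟨θ_pos, θ_lt_one⟩ := hc.θ_mem
  have L_pos : 0 < (lam ^ d)⁻¹ := inv_pos.2 (pow_pos hc.lam_mem.1 d)
  refine le_mul_pow_of_le_add_half_mul (a := (M + 1) * (((lam ^ d)⁻¹ + 1) * A))
    (e := fun k => cubeMean (p k - fun _ => p k y) y (lam ^ k * l)) θ_pos.le
    (le_of_eq (by field_simp)) ?_ (hp.cubeMean_sub_center_succ_le hM hc) k
  rw [pow_zero, one_mul, le_div_iff₀ θ_pos]
  calc cubeMean (p 0 - fun _ => p 0 y) y l * θ ≤ (M + 1) * (2 * A) * 1 :=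
        mul_le_mul (hp.cubeMean_sub_center_zero_le hM) θ_lt_one.le θ_pos.le (by positivity)
    _ = 2 * (M + 1) * (1 * A) := by ring
    _ ≤ 2 * (M + 1) * (((lam ^ d)⁻¹ + 1) * A) := by gcongr; linarith

lemma exists_abs_center_sub_le (hp : IsScaleApprox n h y l lam θ A p)
    (hM : IsMarkovConst d n M) (hlam : lam ∈ Ioo 0 1) (hθ : θ ∈ Ioo 0 1) :
    ∃ c, ∀ k, |p k y - c| ≤ M * (((lam ^ d)⁻¹ + 1) * A) * θ ^ k / (1 - θ) := by
  have dist_le (k : ℕ) : dist (p k y) (p (k + 1) y) ≤ M * (((lam ^ d)⁻¹ + 1) * A) * θ ^ k := by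
    rw [dist_comm]
    exact hp.abs_center_sub_succ_le hM hlam hθ k
  obtain ⟨c, hc⟩ := cauchySeq_tendsto_of_complete (cauchySeq_of_le_geometric θ _ hθ.2 dist_le)
  exact ⟨c, dist_le_of_le_geometric_of_tendsto θ _ hθ.2 dist_le hc⟩

end IsScaleApprox

/-- The constant in the Campanato-type estimate `IsScaleApprox.exists_geometricDecay`. -/
def campanatoConst (d : ℕ) (M lam θ : ℝ) : ℝ :=
  1 + ((lam ^ d)⁻¹ + 1) * (2 * (M + 1) / θ + M / (1 - θ))

lemma campanatoConst_pos (hM : 0 < M) (hlam : lam ∈ Ioo 0 1) (hθ : θ ∈ Ioo 0 1) :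
    0 < campanatoConst d M lam θ := by
  have := hlam.1
  have := hθ.1
  have := sub_pos.2 hθ.2
  rw [campanatoConst]
  positivity

lemma IsScaleApprox.exists_geometricDecay (hp : IsScaleApprox n h y l lam θ A p)
    (hM : IsMarkovConst d n M) (hc : IsContractionPair M lam θ) :
    ∃ c, GeometricDecay (h - fun _ => c) y l lam θ (campanatoConst d M lam θ * A) := by
  obtain ⟨c, abs_center_sub_le⟩ := hp.exists_abs_center_sub_le hM hc.lam_mem hc.θ_mem
  refine ⟨c, fun k => ?_⟩
  have t_pos := hp.scale_pos hc.lam_mem.1 k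
  have h_integrable := hp.integrableOn_scale hc.lam_mem k
  have p_integrable := PolyLE.integrableOn_cube (hp.mem k) y (lam ^ k * l)
  have const_integrable (a : ℝ) :=
    PolyLE.integrableOn_cube (PolyLE.const_mem d n a) y (lam ^ k * l)
  have const_le : cubeMean ((fun _ => p k y) - fun _ => c) y (lam ^ k * l) ≤
      M * (((lam ^ d)⁻¹ + 1) * A) * θ ^ k / (1 - θ) :=
    cubeMean_le_of_forall_abs_le t_pos fun _ _ => abs_center_sub_le k
  calc cubeMean (h - fun _ => c) y (lam ^ k * l)
      ≤ cubeMean (h - p k) y (lam ^ k * l) + (cubeMean (p k - fun _ => p k y) y (lam ^ k * l)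
        + cubeMean ((fun _ => p k y) - fun _ => c) y (lam ^ k * l)) :=
        (cubeMean_sub_le t_pos h_integrable p_integrable (const_integrable c)).trans
          (add_le_add_right (cubeMean_sub_le t_pos p_integrable (const_integrable (p k y))
            (const_integrable c)) _)
    _ ≤ A * θ ^ k + (2 * (M + 1) * (((lam ^ d)⁻¹ + 1) * A) / θ * θ ^ k
        + M * (((lam ^ d)⁻¹ + 1) * A) * θ ^ k / (1 - θ)) :=
        add_le_add (hp.mean_sub_le k)
          (add_le_add (hp.geometric_cubeMean_sub_center_le hM hc k) const_le)
    _ = campanatoConst d M lam θ * A * θ ^ k := by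
        rw [campanatoConst]
        ring

end Campanato

/-! ### Homogeneous kernels -/

section Polar

variable {E : Type*} [NormedAddCommGroup E] [NormedSpace ℝ E] [FiniteDimensional ℝ E]
  [MeasurableSpace E] [BorelSpace E]

lemma integral_mul_comp_norm_eq_of_homogeneous (μ : Measure E) [μ.IsAddHaarMeasure] {Ω : E → ℝ}
    (hΩ : ∀ c : ℝ, 0 < c → ∀ x, Ω (c • x) = Ω x) (φ : ℝ → ℝ) :
    ∫ z in {0}ᶜ, Ω z * φ ‖z‖ ∂μ = (∫ x : sphere (0 : E) 1, Ω x ∂μ.toSphere) *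
      ∫ r : Ioi (0 : ℝ), φ r ∂Measure.volumeIoiPow (Module.finrank ℝ E - 1) := by
  rw [← integral_prod_mul, ← μ.measurePreserving_homeomorphUnitSphereProd.integral_comp
    (Homeomorph.measurableEmbedding _), ← integral_subtype_comap (measurableSet_singleton _).compl]
  refine integral_congr_ae (Eventually.of_forall fun z => ?_)
  simp only [homeomorphUnitSphereProd_apply_fst_coe, homeomorphUnitSphereProd_apply_snd_coe]
  rw [hΩ _ (inv_pos.2 (norm_pos_iff.2 z.2))]

end Polar

section Kernel

variable {d : ℕ} {K u : EuclideanSpace ℝ (Fin d) → ℝ} {y : EuclideanSpace ℝ (Fin d)}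
  {G b l lam s t θ : ℝ}

/-- What the principal value estimate needs of a Calderón–Zygmund kernel: the size bound
`|K x| ≤ G / ‖x‖ ^ d` and vanishing integrals over the annuli around the origin. -/
structure IsCZKernel (K : EuclideanSpace ℝ (Fin d) → ℝ) (G : ℝ) : Prop where
  nonneg : 0 ≤ G
  measurable : Measurable K
  abs_le : ∀ x, |K x| ≤ G / ‖x‖ ^ d
  integral_annulus : ∀ ε ρ : ℝ, 0 < ε → ∫ x in norm ⁻¹' Ioc ε ρ, K x = 0

namespace IsCZDensity

variable {k : ℕ∞} {Ω : EuclideanSpace ℝ (Fin d) → ℝ}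

lemma exists_abs_le (hΩ : IsCZDensity d k Ω) : ∃ G, 0 ≤ G ∧ ∀ x, |Ω x| ≤ G := by
  have continuousOn_sphere : ContinuousOn Ω (sphere 0 1) :=
    hΩ.smooth.continuousOn.mono fun x hx => ne_zero_of_mem_unit_sphere ⟨x, hx⟩
  obtain ⟨G, hG⟩ := (isCompact_sphere 0 1).exists_bound_of_continuousOn continuousOn_sphere
  refine ⟨max G |Ω 0|, le_max_of_le_right (abs_nonneg _), fun x => ?_⟩
  obtain rfl | hx := eq_or_ne x 0
  · exact le_max_right _ _
  rw [← hΩ.homog ‖x‖⁻¹ (inv_pos.2 (norm_pos_iff.2 hx)) x]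
  refine (hG _ ?_).trans (le_max_left _ _)
  rw [mem_sphere_zero_iff_norm, norm_smul, norm_inv, norm_norm,
    inv_mul_cancel₀ (norm_ne_zero_iff.2 hx)]

lemma integral_annulus_eq_zero (hΩ : IsCZDensity d k Ω) {ε : ℝ} (hε : 0 < ε) (ρ : ℝ) :
    ∫ x in norm ⁻¹' Ioc ε ρ, Ω x / ‖x‖ ^ d = 0 := by
  have polar := integral_mul_comp_norm_eq_of_homogeneous volume hΩ.homog
    ((Ioc ε ρ).indicator fun r => (r ^ d)⁻¹)
  rw [hΩ.meanZero, zero_mul, setIntegral_eq_integral_of_forall_compl_eq_zero] at polar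
  · rw [← integral_indicator (measurable_norm measurableSet_Ioc), ← polar]
    congr 1 with x
    by_cases hx : ‖x‖ ∈ Ioc ε ρ
    · rw [indicator_of_mem hx, indicator_of_mem (mem_preimage.2 hx), div_eq_mul_inv]
    · rw [indicator_of_notMem hx, indicator_of_notMem (mt mem_preimage.1 hx), mul_zero]
  · intro x hx
    rw [notMem_compl_iff, mem_singleton_iff] at hx
    rw [hx, norm_zero, indicator_of_notMem (fun h => hε.not_gt h.1), mul_zero]

lemma exists_isCZKernel (hΩ : IsCZDensity d k Ω) :
    ∃ G, IsCZKernel (fun x => Ω x / ‖x‖ ^ d) G := by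
  obtain ⟨G, G_nonneg, abs_le⟩ := hΩ.exists_abs_le
  have measurable_Ω : Measurable Ω :=
    measurable_of_continuousOn_compl_singleton 0 hΩ.smooth.continuousOn
  refine ⟨G, G_nonneg, measurable_Ω.div (measurable_norm.pow_const d), fun x => ?_,
    fun ε ρ hε => hΩ.integral_annulus_eq_zero hε ρ⟩
  rw [abs_div, abs_of_nonneg (a := ‖x‖ ^ d) (by positivity)]
  gcongr
  exact abs_le x

end IsCZDensity

namespace IsCZKernel

lemma measurable_comp_sub (hK : IsCZKernel K G) (y : EuclideanSpace ℝ (Fin d)) :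
    Measurable fun x => K (y - x) :=
  hK.measurable.comp (by fun_prop)

lemma abs_le_of_le_dist (hK : IsCZKernel K G) {x : EuclideanSpace ℝ (Fin d)} (ht : 0 < t)
    (hx : t ≤ dist y x) : |K (y - x)| ≤ G / t ^ d := by
  rw [dist_eq_norm] at hx
  refine (hK.abs_le (y - x)).trans ?_
  have := hK.nonneg
  gcongr

lemma integral_annulus_center (hK : IsCZKernel K G) (y : EuclideanSpace ℝ (Fin d)) {ε : ℝ}
    (hε : 0 < ε) (ρ : ℝ) : ∫ x in dist y ⁻¹' Ioc ε ρ, K (y - x) = 0 := by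
  have indicator_eq : (dist y ⁻¹' Ioc ε ρ).indicator (fun x => K (y - x))
      = fun x => (norm ⁻¹' Ioc ε ρ).indicator K (y - x) := by
    rw [funext (dist_eq_norm y)]
    exact funext fun x => indicator_comp_right (s := norm ⁻¹' Ioc ε ρ) (y - ·)
  rw [← integral_indicator (measurableSet_Ioc.preimage (by fun_prop)), indicator_eq,
    integral_sub_left_eq_self ((norm ⁻¹' Ioc ε ρ).indicator K) volume y,
    integral_indicator (measurable_norm measurableSet_Ioc), hK.integral_annulus ε ρ hε]

end IsCZKernel

lemma half_le_dist_of_notMem_cube {x : EuclideanSpace ℝ (Fin d)} (hx : x ∉ cube y s) :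
    s / 2 ≤ dist y x := by
  rw [dist_comm]
  exact le_of_not_ge fun h => hx (closedBall_subset_cube y s h)

lemma cube_diff_singleton_subset_iUnion_shells (y : EuclideanSpace ℝ (Fin d))
    (hlam : lam ∈ Ioo 0 1) :
    cube y l \ {y} ⊆ ⋃ k : ℕ, cube y (lam ^ k * l) \ cube y (lam ^ (k + 1) * l) := by
  rintro x ⟨hx, hxy⟩
  by_contra notMem_shells
  simp only [mem_iUnion, Set.mem_sdiff, not_exists, not_and, not_not] at notMem_shells
  have mem_cube (k : ℕ) : x ∈ cube y (lam ^ k * l) := by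
    induction k with
    | zero => rwa [pow_zero, one_mul]
    | succ k ih => exact notMem_shells k ih
  have tendsto_zero : Tendsto (fun k : ℕ => lam ^ k * l / 2) atTop (𝓝 0) := by
    simpa only [zero_mul, zero_div] using
      ((tendsto_pow_atTop_nhds_zero_of_lt_one hlam.1.le hlam.2).mul_const l).div_const 2
  refine hxy (PiLp.ext fun i => sub_eq_zero.1 (abs_nonpos_iff.1 ?_))
  exact ge_of_tendsto' tendsto_zero fun k => mem_cube k i

lemma IsCZKernel.setLIntegral_shell_le (hK : IsCZKernel K G) (hs : 0 < s) (ht : 0 < t)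
    (hu : IntegrableOn u (cube y t)) :
    ∫⁻ x in cube y t \ cube y s, ‖u x * K (y - x)‖ₑ ≤
      ENNReal.ofReal (G * 2 ^ d * (t / s) ^ d * cubeMean u y t) := by
  have G_nonneg := hK.nonneg
  have kernel_le {x : EuclideanSpace ℝ (Fin d)} (hx : x ∈ cube y t \ cube y s) :
      ‖u x * K (y - x)‖ₑ ≤ ‖G / (s / 2) ^ d * u x‖ₑ := by
    rw [← ofReal_norm, ← ofReal_norm, norm_mul, norm_mul, mul_comm]
    refine ENNReal.ofReal_le_ofReal (mul_le_mul_of_nonneg_right ?_ (norm_nonneg _))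
    exact (hK.abs_le_of_le_dist (by positivity) (half_le_dist_of_notMem_cube hx.2)).trans
      (le_abs_self _)
  calc ∫⁻ x in cube y t \ cube y s, ‖u x * K (y - x)‖ₑ
      ≤ ∫⁻ x in cube y t \ cube y s, ‖G / (s / 2) ^ d * u x‖ₑ :=
        setLIntegral_mono' ((measurableSet_cube_s18 y t).diff (measurableSet_cube_s18 y s)) @kernel_le
    _ ≤ ∫⁻ x in cube y t, ‖G / (s / 2) ^ d * u x‖ₑ := lintegral_mono_set sdiff_subset
    _ = ENNReal.ofReal (G / (s / 2) ^ d * (t ^ d * cubeMean u y t)) := by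
        rw [← ofReal_integral_norm_eq_lintegral_enorm (hu.const_mul _)]
        simp only [norm_mul, Real.norm_eq_abs, integral_const_mul]
        rw [abs_of_nonneg (by positivity), setIntegral_abs_eq_mul_cubeMean u y ht]
    _ = ENNReal.ofReal (G * 2 ^ d * (t / s) ^ d * cubeMean u y t) := by
        rw [div_pow, div_pow]
        congr 1
        field_simp

/-- The constant in the absolute convergence estimate `GeometricDecay.integral_abs_mul_kernel_le`,
the sum of the bounds for the shells of ratio `lam`. -/
def shellSumConst (d : ℕ) (G lam θ : ℝ) : ℝ := G * 2 ^ d * (lam ^ d)⁻¹ * (1 - θ)⁻¹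

lemma shellSumConst_nonneg (hG : 0 ≤ G) (hlam : 0 ≤ lam) (hθ : θ ≤ 1) :
    0 ≤ shellSumConst d G lam θ := by
  have := sub_nonneg.2 hθ
  rw [shellSumConst]
  positivity

namespace GeometricDecay

lemma nonneg (hub : GeometricDecay u y l lam θ b) (hl : 0 < l) : 0 ≤ b := by
  have decay_zero := hub 0
  rw [pow_zero, one_mul, pow_zero, mul_one] at decay_zero
  exact (cubeMean_nonneg u y hl).trans decay_zero

lemma setLIntegral_shell_le (hub : GeometricDecay u y l lam θ b) (hK : IsCZKernel K G)
    (hl : 0 < l) (hlam : lam ∈ Ioo 0 1) (hu : IntegrableOn u (cube y l)) (k : ℕ) :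
    ∫⁻ x in cube y (lam ^ k * l) \ cube y (lam ^ (k + 1) * l), ‖u x * K (y - x)‖ₑ ≤
      ENNReal.ofReal (G * 2 ^ d * (lam ^ d)⁻¹ * b * θ ^ k) := by
  have side_pos (k : ℕ) : 0 < lam ^ k * l := mul_pos (pow_pos hlam.1 k) hl
  have integrableOn_k : IntegrableOn u (cube y (lam ^ k * l)) :=
    hu.mono_set (cube_pow_mul_subset y hl hlam k)
  refine (hK.setLIntegral_shell_le (side_pos (k + 1)) (side_pos k) integrableOn_k).trans
    (ENNReal.ofReal_le_ofReal ?_)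
  have G_nonneg := hK.nonneg
  have lam_pos := hlam.1
  rw [pow_mul_div_pow_succ_mul hl hlam.1, inv_pow, mul_assoc _ b]
  gcongr
  exact hub k

lemma setLIntegral_le (hub : GeometricDecay u y l lam θ b) (hK : IsCZKernel K G)
    (hl : 0 < l) (hlam : lam ∈ Ioo 0 1) (hθ : θ ∈ Ioo 0 1) (hu : IntegrableOn u (cube y l)) :
    ∫⁻ x in cube y l \ {y}, ‖u x * K (y - x)‖ₑ ≤
      ENNReal.ofReal (shellSumConst d G lam θ * b) := by
  have b_nonneg := hub.nonneg hl
  have G_nonneg := hK.nonneg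
  have lam_pos := hlam.1
  have θ_pos := hθ.1
  calc ∫⁻ x in cube y l \ {y}, ‖u x * K (y - x)‖ₑ
      ≤ ∫⁻ x in ⋃ k : ℕ, cube y (lam ^ k * l) \ cube y (lam ^ (k + 1) * l),
          ‖u x * K (y - x)‖ₑ :=
        lintegral_mono_set (cube_diff_singleton_subset_iUnion_shells y hlam)
    _ ≤ ∑' k : ℕ, ENNReal.ofReal (G * 2 ^ d * (lam ^ d)⁻¹ * b * θ ^ k) :=
        (lintegral_iUnion_le _ _).trans
          (ENNReal.tsum_le_tsum (hub.setLIntegral_shell_le hK hl hlam hu))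
    _ = ENNReal.ofReal (shellSumConst d G lam θ * b) := by
        rw [← ENNReal.ofReal_tsum_of_nonneg (fun k => by positivity)
          ((summable_geometric_of_lt_one hθ.1.le hθ.2).mul_left _), tsum_mul_left,
          tsum_geometric_of_lt_one hθ.1.le hθ.2, shellSumConst]
        ring_nf

lemma integrableOn_mul_kernel (hub : GeometricDecay u y l lam θ b) (hK : IsCZKernel K G)
    (hl : 0 < l) (hlam : lam ∈ Ioo 0 1) (hθ : θ ∈ Ioo 0 1) (hu : IntegrableOn u (cube y l)) :
    IntegrableOn (fun x => u x * K (y - x)) (cube y l \ {y}) :=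
  ⟨(hu.mono_set sdiff_subset).aestronglyMeasurable.mul
      (hK.measurable_comp_sub y).aestronglyMeasurable,
    (hub.setLIntegral_le hK hl hlam hθ hu).trans_lt ENNReal.ofReal_lt_top⟩

lemma integral_abs_mul_kernel_le (hub : GeometricDecay u y l lam θ b) (hK : IsCZKernel K G)
    (hl : 0 < l) (hlam : lam ∈ Ioo 0 1) (hθ : θ ∈ Ioo 0 1) (hu : IntegrableOn u (cube y l)) :
    ∫ x in cube y l \ {y}, |u x * K (y - x)| ≤ shellSumConst d G lam θ * b := by
  have const_nonneg : 0 ≤ shellSumConst d G lam θ * b :=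
    mul_nonneg (shellSumConst_nonneg hK.nonneg hlam.1.le hθ.2.le) (hub.nonneg hl)
  rw [← ENNReal.ofReal_le_ofReal_iff const_nonneg]
  exact (ofReal_integral_norm_eq_lintegral_enorm
    (hub.integrableOn_mul_kernel hK hl hlam hθ hu)).trans_le
      (hub.setLIntegral_le hK hl hlam hθ hu)

end GeometricDecay

end Kernel

/-! ### Principal values -/

lemma tendsto_setIntegral_inter_lt_dist {X : Type*} [PseudoMetricSpace X] [MeasurableSpace X]
    [OpensMeasurableSpace X] {μ : Measure X} {S : Set X} {v : X → ℝ} {y : X}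
    (hS : MeasurableSet S) (hy : ∀ x ∈ S, 0 < dist y x) (hv : IntegrableOn v S μ) :
    Tendsto (fun ε => ∫ x in S ∩ {x | ε < dist y x}, v x ∂μ) (𝓝[>] 0)
      (𝓝 (∫ x in S, v x ∂μ)) := by
  have measurableSet_far (ε : ℝ) : MeasurableSet {x | ε < dist y x} :=
    measurableSet_lt measurable_const (by fun_prop)
  have aecover : AECover (μ.restrict S) (𝓝[>] 0) fun ε : ℝ => {x | ε < dist y x} :=
    ⟨(ae_restrict_iff' hS).2 (Eventually.of_forall fun x hx =>
      nhdsWithin_le_nhds (Iio_mem_nhds (hy x hx))), measurableSet_far⟩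
  have tendsto := aecover.integral_tendsto_of_countably_generated hv
  simp only [Measure.restrict_restrict (measurableSet_far _), inter_comm _ S] at tendsto
  exact tendsto

section PrincipalValue

variable {d : ℕ} {K h : EuclideanSpace ℝ (Fin d) → ℝ} {S : Set (EuclideanSpace ℝ (Fin d))}
  {x₀ y : EuclideanSpace ℝ (Fin d)} {G b c l lam ε θ ρ : ℝ}

/-- `g` is the principal value at `y` of the integral over `S` of `f` against the convolution
kernel `K`. -/
def HasPrincipalValue (K : EuclideanSpace ℝ (Fin d) → ℝ) (S : Set (EuclideanSpace ℝ (Fin d)))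
    (f : EuclideanSpace ℝ (Fin d) → ℝ) (y : EuclideanSpace ℝ (Fin d)) (g : ℝ) : Prop :=
  Tendsto (fun ε : ℝ => ∫ x in {x ∈ S | ε < dist y x}, f x * K (y - x)) (𝓝[>] (0 : ℝ)) (𝓝 g)

lemma measurableSet_sep_lt_dist (hS : MeasurableSet S) (y : EuclideanSpace ℝ (Fin d)) (ε : ℝ) :
    MeasurableSet {x ∈ S | ε < dist y x} :=
  hS.inter (measurableSet_Ioi.preimage (by fun_prop : Measurable (dist y)))

namespace IsCZKernel

lemma integrableOn_mul_sep_lt_dist (hK : IsCZKernel K G) (hS : MeasurableSet S)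
    (hh : IntegrableOn h S) (hε : 0 < ε) (y : EuclideanSpace ℝ (Fin d)) :
    IntegrableOn (fun x => h x * K (y - x)) {x ∈ S | ε < dist y x} := by
  refine Integrable.mul_bdd (c := G / ε ^ d) (hh.mono_set (sep_subset _ _))
    (hK.measurable_comp_sub y).aestronglyMeasurable ?_
  filter_upwards [ae_restrict_mem (measurableSet_sep_lt_dist hS y ε)] with x hx
  exact hK.abs_le_of_le_dist hε hx.2.le

lemma abs_integral_mul_sep_lt_dist_le (hK : IsCZKernel K G) (hS : MeasurableSet S)
    (hh : IntegrableOn h S) (hε : 0 < ε) (y : EuclideanSpace ℝ (Fin d)) :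
    |∫ x in {x ∈ S | ε < dist y x}, h x * K (y - x)| ≤ G / ε ^ d * ∫ x in S, |h x| := by
  have G_nonneg := hK.nonneg
  calc |∫ x in {x ∈ S | ε < dist y x}, h x * K (y - x)|
      ≤ ∫ x in {x ∈ S | ε < dist y x}, G / ε ^ d * |h x| := by
        rw [← Real.norm_eq_abs]
        refine norm_integral_le_of_norm_le ((hh.mono_set (sep_subset _ _)).abs.const_mul _) ?_
        filter_upwards [ae_restrict_mem (measurableSet_sep_lt_dist hS y ε)] with x hx
        rw [norm_mul, mul_comm]
        exact mul_le_mul_of_nonneg_right (hK.abs_le_of_le_dist hε hx.2.le) (abs_nonneg _)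
    _ ≤ ∫ x in S, G / ε ^ d * |h x| :=
        setIntegral_mono_set (hh.abs.const_mul _)
          (Eventually.of_forall fun x => by simp only [Pi.zero_apply]; positivity)
          (sep_subset _ _).eventuallyLE
    _ = G / ε ^ d * ∫ x in S, |h x| := integral_const_mul _ _

lemma integral_annulus_mul_eq (hK : IsCZKernel K G) (hε : 0 < ε)
    (hh : IntegrableOn (fun x => h x * K (y - x)) (dist y ⁻¹' Ioc ε ρ))
    (hhc : IntegrableOn (fun x => (h x - c) * K (y - x)) (dist y ⁻¹' Ioc ε ρ)) :
    ∫ x in dist y ⁻¹' Ioc ε ρ, h x * K (y - x)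
      = ∫ x in dist y ⁻¹' Ioc ε ρ, (h x - c) * K (y - x) := by
  rw [← sub_eq_zero, ← integral_sub hh hhc]
  calc ∫ x in dist y ⁻¹' Ioc ε ρ, (h x * K (y - x) - (h x - c) * K (y - x))
      = ∫ x in dist y ⁻¹' Ioc ε ρ, c * K (y - x) := by congr 1 with x; ring
    _ = 0 := by rw [integral_const_mul, hK.integral_annulus_center y hε, mul_zero]

lemma integral_sep_lt_dist_eq (hK : IsCZKernel K G) (hS : MeasurableSet S)
    (hh : IntegrableOn h S) (hball : closedBall y ρ ⊆ S) (hε : 0 < ε) (hερ : ε < ρ)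
    (hhc : IntegrableOn (fun x => (h x - c) * K (y - x)) (closedBall y ρ \ {y})) :
    ∫ x in {x ∈ S | ε < dist y x}, h x * K (y - x)
      = (∫ x in {x ∈ S | ρ < dist y x}, h x * K (y - x))
        + ∫ x in (closedBall y ρ \ {y}) ∩ {x | ε < dist y x}, (h x - c) * K (y - x) := by
  have annulus_eq : (closedBall y ρ \ {y}) ∩ {x | ε < dist y x} = dist y ⁻¹' Ioc ε ρ := by
    ext x
    simp only [mem_inter_iff, Set.mem_sdiff, mem_closedBall', mem_singleton_iff, mem_ofPred_eq,
      mem_preimage, mem_Ioc]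
    exact ⟨fun hx => ⟨hx.2, hx.1.1⟩,
      fun hx => ⟨⟨hx.2, fun h => (dist_pos.1 (hε.trans hx.1)) h.symm⟩, hx.1⟩⟩
  have union_eq : {x ∈ S | ε < dist y x} = {x ∈ S | ρ < dist y x} ∪ dist y ⁻¹' Ioc ε ρ := by
    ext x
    simp only [mem_ofPred_eq, mem_union, mem_preimage, mem_Ioc]
    constructor
    · rintro ⟨hxS, hεx⟩
      exact (lt_or_ge ρ (dist y x)).imp (fun hρx => ⟨hxS, hρx⟩) fun hxρ => ⟨hεx, hxρ⟩
    · rintro (⟨hxS, hρx⟩ | ⟨hεx, hxρ⟩)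
      · exact ⟨hxS, hερ.trans hρx⟩
      · exact ⟨hball (mem_closedBall'.2 hxρ), hεx⟩
  have disjoint : Disjoint {x ∈ S | ρ < dist y x} (dist y ⁻¹' Ioc ε ρ) :=
    disjoint_left.2 fun x hx hx' => hx.2.not_ge hx'.2
  have integrable_annulus :=
    (hK.integrableOn_mul_sep_lt_dist hS hh hε y).mono_set (union_eq ▸ subset_union_right)
  rw [annulus_eq, union_eq, setIntegral_union disjoint (measurableSet_Ioc.preimage (by fun_prop))
    (hK.integrableOn_mul_sep_lt_dist hS hh (hε.trans hερ) y) integrable_annulus,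
    hK.integral_annulus_mul_eq hε integrable_annulus
      (hhc.mono_set (annulus_eq ▸ inter_subset_left))]

lemma hasPrincipalValue (hK : IsCZKernel K G) (hS : MeasurableSet S)
    (hh : IntegrableOn h S) (hρ : 0 < ρ) (hball : closedBall y ρ ⊆ S)
    (hhc : IntegrableOn (fun x => (h x - c) * K (y - x)) (closedBall y ρ \ {y})) :
    HasPrincipalValue K S h y ((∫ x in {x ∈ S | ρ < dist y x}, h x * K (y - x))
      + ∫ x in closedBall y ρ \ {y}, (h x - c) * K (y - x)) := by
  have tendsto_near := tendsto_setIntegral_inter_lt_dist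
    (measurableSet_closedBall.diff (measurableSet_singleton y))
    (fun x hx => dist_pos.2 (Ne.symm hx.2)) hhc
  refine (tendsto_near.const_add _).congr' ?_
  filter_upwards [Ioo_mem_nhdsGT hρ] with ε hε
  exact (hK.integral_sep_lt_dist_eq hS hh hball hε.1 hε.2 hhc).symm

lemma exists_hasPrincipalValue (hK : IsCZKernel K G) (hl : 0 < l) (hlam : lam ∈ Ioo 0 1)
    (hθ : θ ∈ Ioo 0 1) (hy : y ∈ cube x₀ l) (hh : IntegrableOn h (cube x₀ (2 * l)))
    (hc : GeometricDecay (h - fun _ => c) y l lam θ b) :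
    ∃ g, HasPrincipalValue K (cube x₀ (2 * l)) h y g ∧
      |g| ≤ G * 4 ^ d * cubeMean h x₀ (2 * l) + shellSumConst d G lam θ * b := by
  have cube_subset : cube y l ⊆ cube x₀ (2 * l) := two_mul l ▸ cube_subset_cube_add hy
  have ball_subset := closedBall_subset_cube y l
  have sub_integrable : IntegrableOn (h - fun _ => c) (cube y l) :=
    (hh.mono_set cube_subset).sub (PolyLE.integrableOn_cube (PolyLE.const_mem d 0 c) y l)
  have near_integrable := hc.integrableOn_mul_kernel hK hl hlam hθ sub_integrable
  have punctured_subset : closedBall y (l / 2) \ {y} ⊆ cube y l \ {y} :=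
    sdiff_subset_sdiff_left ball_subset
  refine ⟨_, hK.hasPrincipalValue (measurableSet_cube_s18 x₀ (2 * l)) hh (half_pos hl)
    (ball_subset.trans cube_subset) (near_integrable.mono_set punctured_subset), ?_⟩
  refine (abs_add_le _ _).trans (add_le_add ?far ?near)
  case far =>
    calc |∫ x in {x ∈ cube x₀ (2 * l) | l / 2 < dist y x}, h x * K (y - x)|
        ≤ G / (l / 2) ^ d * ∫ x in cube x₀ (2 * l), |h x| :=
          hK.abs_integral_mul_sep_lt_dist_le (measurableSet_cube_s18 _ _) hh (half_pos hl) y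
      _ = G * 4 ^ d * cubeMean h x₀ (2 * l) := by
          rw [setIntegral_abs_eq_mul_cubeMean h x₀ (by positivity), div_pow, mul_pow,
            show (4 : ℝ) = 2 * 2 by norm_num, mul_pow]
          field_simp
  case near =>
    calc |∫ x in closedBall y (l / 2) \ {y}, (h x - c) * K (y - x)|
        ≤ ∫ x in closedBall y (l / 2) \ {y}, |(h x - c) * K (y - x)| :=
          abs_integral_le_integral_abs
      _ ≤ ∫ x in cube y l \ {y}, |(h x - c) * K (y - x)| :=
          setIntegral_mono_set near_integrable.abs (Eventually.of_forall fun _ => abs_nonneg _)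
            punctured_subset.eventuallyLE
      _ ≤ shellSumConst d G lam θ * b :=
          hc.integral_abs_mul_kernel_le hK hl hlam hθ sub_integrable

end IsCZKernel

lemma exists_hasPrincipalValue_abs_le_of_forall_lt {B a : ℝ}
    (H : ∀ s, a < s → ∃ g, HasPrincipalValue K S h y g ∧ |g| ≤ B * s) :
    ∃ g, HasPrincipalValue K S h y g ∧ |g| ≤ B * a := by
  obtain ⟨g, hg, -⟩ := H (a + 1) (lt_add_one a)
  have abs_le_of_lt (s : ℝ) (hs : a < s) : |g| ≤ B * s := by
    obtain ⟨g', hg', abs_le⟩ := H s hs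
    rwa [tendsto_nhds_unique hg hg']
  have tendsto : Tendsto (fun s => B * s) (𝓝[>] a) (𝓝 (B * a)) :=
    tendsto_nhdsWithin_of_tendsto_nhds (tendsto_id.const_mul B)
  exact ⟨g, hg, ge_of_tendsto tendsto (eventually_mem_nhdsWithin.mono abs_le_of_lt)⟩

end PrincipalValue

/-! ### Moduli of continuity and the seminorm -/

/-- What the estimate of the local part needs of a modulus of continuity: doubling, and decay at
`0` at least as fast as some positive power. -/
structure IsPowerModulus (ω : ℝ → ℝ) : Prop where
  nonneg : ∀ t, 0 < t → 0 ≤ ω t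
  doubling : ∃ C, 0 ≤ C ∧ ∀ t, 0 < t → ω (2 * t) ≤ C * ω t
  decay : ∃ r : ℝ, 0 < r ∧ ∃ C, 0 ≤ C ∧
    ∀ s t : ℝ, 0 < s → s < 1 → 0 < t → ω (s * t) ≤ C * s ^ r * ω t

lemma IsModulusOfOrder.isPowerModulus {ω : ℝ → ℝ} {n : ℕ} (hω : IsModulusOfOrder ω n) :
    IsPowerModulus ω := by
  obtain ⟨⟨q, -, -, Cq, hCq, hq⟩, r, hr, -, Cr, hCr, hdecay⟩ := hω.conds
  have one_le_n : (1 : ℝ) ≤ n := mod_cast hω.npos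
  exact ⟨fun t ht => hω.nonneg t ht.le,
    ⟨Cq * 2 ^ q, by positivity, fun t ht => hq 2 t one_lt_two ht⟩,
    ⟨r, by linarith, Cr, hCr.le, hdecay⟩⟩

namespace IsPowerModulus

lemma exists_isContractionPair {ω : ℝ → ℝ} (hω : IsPowerModulus ω) {M : ℝ} (hM : 1 ≤ M) :
    ∃ lam θ C, IsContractionPair M lam θ ∧ 0 ≤ C ∧
      ∀ l, 0 < l → ∀ k : ℕ, ω (lam ^ k * l) ≤ C * θ ^ k * ω l := by
  obtain ⟨r, r_pos, C, C_nonneg, hdecay⟩ := hω.decay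
  have lam_pos : 0 < (4 * M)⁻¹ := by positivity
  have lam_lt_one : (4 * M)⁻¹ < 1 := inv_lt_one_of_one_lt₀ (by linarith)
  set lam := (4 * M)⁻¹ with lam_def
  set θ := max (lam ^ r) 2⁻¹
  have half_le : 2⁻¹ ≤ θ := le_max_right _ _
  have M_mul_lam : M * lam = 4⁻¹ := by rw [lam_def]; field_simp
  refine ⟨lam, θ, C + 1, ⟨⟨lam_pos, lam_lt_one⟩, ⟨by linarith, ?_⟩, by linarith⟩, by positivity,
    fun l hl k => ?_⟩
  · exact max_lt (Real.rpow_lt_one lam_pos.le lam_lt_one r_pos) (by norm_num)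
  have ω_nonneg := hω.nonneg l hl
  obtain rfl | k_ne_zero := eq_or_ne k 0
  · simpa using le_mul_of_one_le_left ω_nonneg (by linarith : 1 ≤ C + 1)
  calc ω (lam ^ k * l)
      ≤ C * (lam ^ k) ^ r * ω l :=
        hdecay _ l (by positivity) (pow_lt_one₀ lam_pos.le lam_lt_one k_ne_zero) hl
    _ = C * (lam ^ r) ^ k * ω l := by rw [Real.rpow_pow_comm lam_pos.le]
    _ ≤ (C + 1) * θ ^ k * ω l := by
        gcongr
        · linarith
        · exact le_max_left _ _

end IsPowerModulus

section Seminorm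

variable {d n : ℕ} {ω : ℝ → ℝ} {D : Set (EuclideanSpace ℝ (Fin d))}
  {f P R u : EuclideanSpace ℝ (Fin d) → ℝ} {x₀ y : EuclideanSpace ℝ (Fin d)}
  {l lam s t θ C C₀ M : ℝ}

lemma lintegral_abs_eq_ofReal_cubeMean (ht : 0 < t) (hu : IntegrableOn u (cube y t)) :
    ∫⁻ x in cube y t, ENNReal.ofReal |u x| = ENNReal.ofReal (t ^ d * cubeMean u y t) := by
  rw [← setIntegral_abs_eq_mul_cubeMean u y ht,
    ofReal_integral_eq_lintegral_ofReal hu.abs (Eventually.of_forall fun x => abs_nonneg (u x))]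

lemma exists_cubeMean_sub_le_of_zygSeminorm_lt (hf : IntegrableOn f (cube y t)) (ht : 0 < t)
    (hω : 0 ≤ ω t) (hsub : cube y t ⊆ D) (hs : zygSeminorm ω n D f < ENNReal.ofReal s) :
    ∃ R ∈ PolyLE d n, cubeMean (f - R) y t ≤ ω t * s := by
  have s_pos : 0 < s := ENNReal.ofReal_pos.1 (bot_le.trans_lt hs)
  have iInf_lt := (le_iSup₂_of_le y t (le_iSup₂_of_le ht hsub le_rfl)).trans_lt hs
  simp only [iInf_lt_iff] at iInf_lt
  obtain ⟨R, hR, lintegral_lt⟩ := iInf_lt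
  refine ⟨R, hR, ?_⟩
  have lintegral_le : ∫⁻ x in cube y t, ENNReal.ofReal |f x - R x| ≤
      ENNReal.ofReal s * ENNReal.ofReal (ω t * t ^ d) := by
    rw [mul_comm, ← div_eq_mul_inv] at lintegral_lt
    exact (ENNReal.div_le_iff_le_mul (Or.inr ENNReal.ofReal_ne_top)
      (Or.inl ENNReal.ofReal_ne_top)).1 lintegral_lt.le
  have mean_eq := lintegral_abs_eq_ofReal_cubeMean ht (hf.sub (PolyLE.integrableOn_cube hR y t))
  rw [← ENNReal.ofReal_mul s_pos.le] at lintegral_le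
  have scaled_le := (ENNReal.ofReal_le_ofReal_iff (by positivity)).1 (mean_eq.ge.trans lintegral_le)
  refine le_of_mul_le_mul_left ?_ (pow_pos ht d)
  linarith

lemma IsNearBestApprox.cubeMean_sub_le (hP : IsNearBestApprox ω n D f C₀ x₀ l P)
    (hf : IntegrableOn f (cube x₀ l)) (hl : 0 < l) (hs : zygSeminorm ω n D f ≤ ENNReal.ofReal s)
    (hs₀ : 0 ≤ s) (hC₀ : 0 ≤ C₀ * ω l) :
    cubeMean (f - P) x₀ l ≤ C₀ * ω l * s := by
  have mean_eq := lintegral_abs_eq_ofReal_cubeMean hl (hf.sub (PolyLE.integrableOn_cube hP.1 x₀ l))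
  have volume_pos : 0 < l ^ d := pow_pos hl d
  refine (ENNReal.ofReal_le_ofReal_iff (by positivity)).1 ?_
  calc ENNReal.ofReal (cubeMean (f - P) x₀ l)
      = (ENNReal.ofReal (l ^ d))⁻¹ * ∫⁻ x in cube x₀ l, ENNReal.ofReal |f x - P x| := by
        refine Eq.trans ?_ (congrArg _ mean_eq.symm)
        rw [ENNReal.ofReal_mul volume_pos.le, ENNReal.inv_mul_cancel_left
          (ENNReal.ofReal_pos.2 volume_pos).ne' ENNReal.ofReal_ne_top]
    _ ≤ ENNReal.ofReal (C₀ * ω l) * ENNReal.ofReal s := hP.2.trans (by gcongr)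
    _ = ENNReal.ofReal (C₀ * ω l * s) := (ENNReal.ofReal_mul hC₀).symm

lemma IsMarkovConst.cubeMean_sub_double_le (hM : IsMarkovConst d n M) (hl : 0 < l)
    (hf : IntegrableOn f (cube x₀ (2 * l))) (hP : P ∈ PolyLE d n) (hR : R ∈ PolyLE d n) :
    cubeMean (f - P) x₀ (2 * l) ≤
      (1 + M * 2 ^ d) * cubeMean (f - R) x₀ (2 * l) + M * cubeMean (f - P) x₀ l := by
  have subset_double : cube x₀ l ⊆ cube x₀ (2 * l) := cube_subset_cube x₀ (by linarith)
  have triangle := cubeMean_sub_le (by positivity) hf (PolyLE.integrableOn_cube hR x₀ (2 * l))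
    (PolyLE.integrableOn_cube hP x₀ (2 * l))
  have triangle_inner := cubeMean_sub_le hl (PolyLE.integrableOn_cube hR x₀ l)
    (hf.mono_set subset_double) (PolyLE.integrableOn_cube hP x₀ l)
  have inner_le : cubeMean (R - f) x₀ l ≤ 2 ^ d * cubeMean (f - R) x₀ (2 * l) := by
    rw [cubeMean_sub_comm]
    simpa only [mul_div_cancel_right₀ _ hl.ne'] using cubeMean_le_of_subset hl (by positivity)
      (hf.sub (PolyLE.integrableOn_cube hR x₀ (2 * l))) subset_double
  have doubling : cubeMean (R - P) x₀ (2 * l) ≤ M * cubeMean (R - P) x₀ l :=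
    cubeMean_le_of_forall_abs_le (by positivity)
      (hM.abs_le _ (PolyLE.sub_mem hR hP) x₀ l hl)
  have := mul_le_mul_of_nonneg_left (triangle_inner.trans (add_le_add_left inner_le _)) hM.pos.le
  linarith

lemma exists_isScaleApprox (hf : IntegrableOn f (cube y l)) (hl : 0 < l)
    (hlam : lam ∈ Ioo 0 1) (hθ : 0 ≤ θ) (hω : ∀ t, 0 < t → 0 ≤ ω t)
    (hdecay : ∀ k : ℕ, ω (lam ^ k * l) ≤ C * θ ^ k * ω l) (hsub : cube y l ⊆ D)
    (hs : zygSeminorm ω n D f < ENNReal.ofReal s) (hP : P ∈ PolyLE d n) :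
    ∃ p, IsScaleApprox n (f - P) y l lam θ (cubeMean (f - P) y l + C * (ω l * s)) p := by
  have s_pos : 0 < s := ENNReal.ofReal_pos.1 (bot_le.trans_lt hs)
  have scale_pos (k : ℕ) : 0 < lam ^ k * l := mul_pos (pow_pos hlam.1 k) hl
  have scale_subset := cube_pow_mul_subset y hl hlam
  choose R hR mean_sub_le using fun k : ℕ =>
    exists_cubeMean_sub_le_of_zygSeminorm_lt (hf.mono_set (scale_subset k)) (scale_pos k)
      (hω _ (scale_pos k)) ((scale_subset k).trans hsub) hs
  have mean_nonneg := cubeMean_nonneg (f - P) y hl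
  have decay_nonneg : 0 ≤ C * (ω l * s) := by
    have := (hω _ (scale_pos 0)).trans (hdecay 0)
    rw [pow_zero, mul_one] at this
    rw [← mul_assoc]
    positivity
  refine ⟨fun k => R k - P, hl, hf.sub (PolyLE.integrableOn_cube hP y l),
    fun k => PolyLE.sub_mem (hR k) hP, by linarith, fun k => ?_⟩
  rw [sub_sub_sub_cancel_right]
  calc cubeMean (f - R k) y (lam ^ k * l)
      ≤ C * θ ^ k * ω l * s :=
        (mean_sub_le k).trans (mul_le_mul_of_nonneg_right (hdecay k) s_pos.le)
    _ = C * (ω l * s) * θ ^ k := by ring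
    _ ≤ (cubeMean (f - P) y l + C * (ω l * s)) * θ ^ k := by gcongr; linarith

end Seminorm

/-! ### The local part -/

section LocalPart

variable {d n : ℕ} {ω : ℝ → ℝ} {D : Set (EuclideanSpace ℝ (Fin d))}
  {f g K P : EuclideanSpace ℝ (Fin d) → ℝ} {x₀ y : EuclideanSpace ℝ (Fin d)}
  {B l lam s θ C C₀ G M : ℝ}

lemma IsCZKernel.exists_hasPrincipalValue_of_zygSeminorm_lt (hK : IsCZKernel K G)
    (hM : IsMarkovConst d n M) (hc : IsContractionPair M lam θ) (hω : ∀ t, 0 < t → 0 ≤ ω t)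
    (hl : 0 < l) (hdecay : ∀ k : ℕ, ω (lam ^ k * l) ≤ C * θ ^ k * ω l)
    (hf : IntegrableOn f (cube x₀ (2 * l))) (hsub : cube x₀ (2 * l) ⊆ D)
    (hs : zygSeminorm ω n D f < ENNReal.ofReal s) (hP : P ∈ PolyLE d n) (hy : y ∈ cube x₀ l) :
    ∃ g, HasPrincipalValue K (cube x₀ (2 * l)) (f - P) y g ∧
      |g| ≤ G * 4 ^ d * cubeMean (f - P) x₀ (2 * l) + shellSumConst d G lam θ *
        (campanatoConst d M lam θ *
          (2 ^ d * cubeMean (f - P) x₀ (2 * l) + C * (ω l * s))) := by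
  have cube_subset : cube y l ⊆ cube x₀ (2 * l) := two_mul l ▸ cube_subset_cube_add hy
  have h_integrable : IntegrableOn (f - P) (cube x₀ (2 * l)) :=
    hf.sub (PolyLE.integrableOn_cube hP x₀ (2 * l))
  obtain ⟨p, hp⟩ := exists_isScaleApprox (hf.mono_set cube_subset) hl hc.lam_mem hc.θ_mem.1.le hω
    hdecay (cube_subset.trans hsub) hs hP
  obtain ⟨c, hdecay_c⟩ := hp.exists_geometricDecay hM hc
  obtain ⟨g, hg, abs_le⟩ := hK.exists_hasPrincipalValue hl hc.lam_mem hc.θ_mem hy h_integrable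
    hdecay_c
  have mean_le : cubeMean (f - P) y l ≤ 2 ^ d * cubeMean (f - P) x₀ (2 * l) := by
    simpa only [mul_div_cancel_right₀ _ hl.ne'] using
      cubeMean_le_of_subset hl (by positivity) h_integrable cube_subset
  have shell_nonneg := shellSumConst_nonneg (d := d) hK.nonneg hc.lam_mem.1.le hc.θ_mem.2.le
  have campanato_nonneg := (campanatoConst_pos (d := d) hM.pos hc.lam_mem hc.θ_mem).le
  exact ⟨g, hg, abs_le.trans (by gcongr)⟩

lemma IsNearBestApprox.cubeMean_sub_double_le (hP : IsNearBestApprox ω n D f C₀ x₀ l P)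
    (hM : IsMarkovConst d n M) (hω : ∀ t, 0 < t → 0 ≤ ω t) (hdouble : ω (2 * l) ≤ C * ω l)
    (hC₀ : 0 ≤ C₀) (hl : 0 < l) (hf : IntegrableOn f (cube x₀ (2 * l)))
    (hsub : cube x₀ (2 * l) ⊆ D) (hs : zygSeminorm ω n D f < ENNReal.ofReal s) :
    cubeMean (f - P) x₀ (2 * l) ≤ ((1 + M * 2 ^ d) * C + M * C₀) * (ω l * s) := by
  have s_pos : 0 < s := ENNReal.ofReal_pos.1 (bot_le.trans_lt hs)
  have M_pos := hM.pos
  obtain ⟨R, hR, mean_R_le⟩ := exists_cubeMean_sub_le_of_zygSeminorm_lt hf (by positivity)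
    (hω _ (by positivity)) hsub hs
  have mean_P_le := hP.cubeMean_sub_le (hf.mono_set (cube_subset_cube x₀ (by linarith))) hl hs.le
    s_pos.le (mul_nonneg hC₀ (hω l hl))
  calc cubeMean (f - P) x₀ (2 * l)
      ≤ (1 + M * 2 ^ d) * cubeMean (f - R) x₀ (2 * l) + M * cubeMean (f - P) x₀ l :=
        hM.cubeMean_sub_double_le hl hf hP.1 hR
    _ ≤ (1 + M * 2 ^ d) * (C * ω l * s) + M * (C₀ * ω l * s) := by
        gcongr
        exact mean_R_le.trans (by gcongr)
    _ = ((1 + M * 2 ^ d) * C + M * C₀) * (ω l * s) := by ring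

lemma inv_mul_setLIntegral_cube_le (hl : 0 < l) (hg : ∀ y ∈ cube x₀ l, |g y| ≤ B) :
    (ENNReal.ofReal (l ^ d))⁻¹ * ∫⁻ y in cube x₀ l, ENNReal.ofReal |g y| ≤ ENNReal.ofReal B := by
  have volume_pos : 0 < ENNReal.ofReal (l ^ d) := ENNReal.ofReal_pos.2 (pow_pos hl d)
  calc (ENNReal.ofReal (l ^ d))⁻¹ * ∫⁻ y in cube x₀ l, ENNReal.ofReal |g y|
      ≤ (ENNReal.ofReal (l ^ d))⁻¹ * ∫⁻ _ in cube x₀ l, ENNReal.ofReal B := by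
        gcongr 1
        exact setLIntegral_mono' (measurableSet_cube_s18 x₀ l) fun y hy =>
          ENNReal.ofReal_le_ofReal (hg y hy)
    _ = ENNReal.ofReal B := by
        rw [setLIntegral_const, volume_cube_s18 x₀ hl.le, mul_comm (ENNReal.ofReal B),
          ENNReal.inv_mul_cancel_left volume_pos.ne' ENNReal.ofReal_ne_top]

lemma exists_const_hasPrincipalValue_abs_le (hω : IsPowerModulus ω) (hK : IsCZKernel K G)
    (hC₀ : 0 ≤ C₀) (n : ℕ) (D : Set (EuclideanSpace ℝ (Fin d))) :
    ∃ C, 0 < C ∧ ∀ f x₀ l P s, 0 < l → cube x₀ (2 * l) ⊆ D →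
      IntegrableOn f (cube x₀ (2 * l)) → zygSeminorm ω n D f < ENNReal.ofReal s →
      IsNearBestApprox ω n D f C₀ x₀ l P → ∀ y ∈ cube x₀ l,
        ∃ g, HasPrincipalValue K (cube x₀ (2 * l)) (f - P) y g ∧ |g| ≤ C * ω l * s := by
  obtain ⟨M, hM⟩ := exists_isMarkovConst d n
  obtain ⟨lam, θ, Cr, hc, Cr_nonneg, hdecay⟩ := hω.exists_isContractionPair hM.one_le
  obtain ⟨Cd, Cd_nonneg, hdouble⟩ := hω.doubling
  have G_nonneg := hK.nonneg
  have M_pos := hM.pos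
  have shell_nonneg := shellSumConst_nonneg (d := d) hK.nonneg hc.lam_mem.1.le hc.θ_mem.2.le
  have campanato_nonneg := (campanatoConst_pos (d := d) hM.pos hc.lam_mem hc.θ_mem).le
  set σ := shellSumConst d G lam θ
  set κ := campanatoConst d M lam θ
  set B := (1 + M * 2 ^ d) * Cd + M * C₀
  set A := G * 4 ^ d * B + σ * (κ * (2 ^ d * B + Cr))
  refine ⟨A + 1, by positivity, ?_⟩
  intro f x₀ l P s hl hsub hf hs hP y hy
  have s_pos : 0 < s := ENNReal.ofReal_pos.1 (bot_le.trans_lt hs)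
  have ω_nonneg := hω.nonneg l hl
  have mean_le : cubeMean (f - P) x₀ (2 * l) ≤ B * (ω l * s) :=
    hP.cubeMean_sub_double_le hM hω.nonneg (hdouble l hl) hC₀ hl hf hsub hs
  obtain ⟨g, hg, abs_le⟩ := hK.exists_hasPrincipalValue_of_zygSeminorm_lt hM hc hω.nonneg hl
    (hdecay l hl) hf hsub hs hP.1 hy
  refine ⟨g, hg, ?_⟩
  calc |g| ≤ G * 4 ^ d * (B * (ω l * s)) +
        σ * (κ * (2 ^ d * (B * (ω l * s)) + Cr * (ω l * s))) := abs_le.trans (by gcongr)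
    _ = A * ω l * s := by ring
    _ ≤ (A + 1) * ω l * s := by gcongr; exact le_add_of_nonneg_right zero_le_one

end LocalPart

theorem statement_18_general {d n : ℕ} {k : ℕ∞} (ω : ℝ → ℝ) (hω : IsPowerModulus ω)
    (D : Set (EuclideanSpace ℝ (Fin d))) (Ω K : EuclideanSpace ℝ (Fin d) → ℝ)
    (hΩ : IsCZDensity d k Ω) (hK : K = fun x => Ω x / ‖x‖ ^ d) (C₀ : ℝ) (hC₀ : 0 ≤ C₀) :
    ∃ C : ℝ, 0 < C ∧
      ∀ f : EuclideanSpace ℝ (Fin d) → ℝ, LocallyIntegrableOn f D → zygSeminorm ω n D f < ⊤ →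
        ∀ (x₀ : EuclideanSpace ℝ (Fin d)) (l : ℝ), 0 < l → cube x₀ (2 * l) ⊆ D →
          ∀ P : EuclideanSpace ℝ (Fin d) → ℝ, IsNearBestApprox ω n D f C₀ x₀ l P →
            ∃ g : EuclideanSpace ℝ (Fin d) → ℝ, ∀ y ∈ cube x₀ l,
              HasPrincipalValue K (cube x₀ (2 * l)) (f - P) y (g y) ∧
                |g y| ≤ C * ω l * (zygSeminorm ω n D f).toReal := by
  obtain ⟨G, hG⟩ := hΩ.exists_isCZKernel
  rw [← hK] at hG
  obtain ⟨C, C_pos, hC⟩ := exists_const_hasPrincipalValue_abs_le hω hG hC₀ n D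
  refine ⟨C, C_pos, fun f hf seminorm_lt_top x₀ l hl hsub P hP => ?_⟩
  have f_integrable := hf.integrableOn_compact_subset hsub (isCompact_cube_s18 x₀ (2 * l))
  have exists_value (y) (hy : y ∈ cube x₀ l) :
      ∃ g, HasPrincipalValue K (cube x₀ (2 * l)) (f - P) y g ∧
        |g| ≤ C * ω l * (zygSeminorm ω n D f).toReal :=
    exists_hasPrincipalValue_abs_le_of_forall_lt fun s hs =>
      hC f x₀ l P s hl hsub f_integrable
        ((ENNReal.lt_ofReal_iff_toReal_lt seminorm_lt_top.ne).2 hs) hP y hy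
  choose! g hg using exists_value
  exact ⟨g, hg⟩

/-- **The local part.** For `f₂ = (f - P_Q) χ_{2Q}`, the principal value `T f₂` exists
a.e. on `Q` and its average over `Q` is at most `C ω(ℓ) ‖f‖`. -/
theorem statement_18 {d n : ℕ} (ω : ℝ → ℝ) (hω : IsModulusOfOrder ω n)
    (D : Set (EuclideanSpace ℝ (Fin d))) (hD : IsLipschitzDomain D)
    (Ω K : EuclideanSpace ℝ (Fin d) → ℝ)
    (hΩ : IsCZDensity d ((n : ℕ∞) + 1) Ω)
    (hK : K = fun x => Ω x / ‖x‖ ^ d)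
    (C₀ : ℝ) (hC₀ : 0 < C₀) :
    ∃ C : ℝ, 0 < C ∧
      ∀ f : EuclideanSpace ℝ (Fin d) → ℝ,
        LocallyIntegrableOn f D → IntegrableOn f D → zygSeminorm ω n D f < ⊤ →
        ∀ (x₀ : EuclideanSpace ℝ (Fin d)) (l : ℝ), 0 < l → cube x₀ (2 * l) ⊆ D →
          ∀ P : EuclideanSpace ℝ (Fin d) → ℝ,
            IsNearBestApprox ω n D f C₀ x₀ l P →
            ∃ g : EuclideanSpace ℝ (Fin d) → ℝ,
              (∀ᵐ y ∂(volume.restrict (cube x₀ l)),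
                Tendsto (fun ε : ℝ =>
                    ∫ x in {x ∈ cube x₀ (2 * l) | ε < dist y x},
                      (f x - P x) * K (y - x))
                  (𝓝[>] (0 : ℝ)) (𝓝 (g y))) ∧
              (ENNReal.ofReal (l ^ d))⁻¹ *
                  ∫⁻ y in cube x₀ l, ENNReal.ofReal |g y| ≤
                ENNReal.ofReal (C * ω l *
                  ((zygSeminorm ω n D f).toReal + ∫ x in D, |f x|)) := by
  obtain ⟨C, C_pos, hC⟩ := statement_18_general ω hω.isPowerModulus D Ω K hΩ hK C₀ hC₀.le
  refine ⟨C, C_pos, fun f hf _ seminorm_lt_top x₀ l hl hsub P hP => ?_⟩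
  obtain ⟨g, hg⟩ := hC f hf seminorm_lt_top x₀ l hl hsub P hP
  have C_mul_nonneg : 0 ≤ C * ω l := mul_nonneg C_pos.le (hω.nonneg l hl.le)
  have l1_nonneg : 0 ≤ ∫ x in D, |f x| := integral_nonneg fun x => abs_nonneg (f x)
  exact ⟨g, ae_restrict_of_forall_mem (measurableSet_cube_s18 x₀ l) fun y hy => (hg y hy).1,
    inv_mul_setLIntegral_cube_le hl fun y hy => (hg y hy).2.trans
      (mul_le_mul_of_nonneg_left (le_add_of_nonneg_right l1_nonneg) C_mul_nonneg)⟩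

end
end
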